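/- For every positive integer k there exist constants C, D > 0 depending only on k with the following property: let α : G_1 × ⋯ × G_k → 𝔽 be a multilinear form with 𝔼_{x_1,…,x_k} χ(α(x_1,…,x_k)) ≥ c for some c > 0. Then there exist r ≤ C·(log_{|𝔽|}(|𝔽|·c^{-1}))^D, nonempty sets I_1, …, I_r ⊆ [k−1], and multilinear forms β_i : ∏_{j∈I_i} G_j → 𝔽 and γ_i : ∏_{j∈[k]∖I_i} G_j → 𝔽 for i ∈ [r], such that α(x) = Σ_{i∈[r]} β_i(x_{I_i})·γ_i(x_{[k]∖I_i}) for all x ∈ G_1 × ⋯ × G_k. -/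

import Mathlib

/-!
Fix a coordinate `i₀`, and let `X` be the set of points `x` such that `α` vanishes on all
modifications of `x` in the coordinate `i₀`. Averaging over that coordinate shows that the bias
of `α` is the density of `X`, so the density is at least `q⁻ˡ`, where `q = |𝔽|` and `l` is about
`log_q (1 / c)`. After extending scalars to a field `K` of degree `m`, a large multiple of `l`, the
analogous set still has density at least `|K|⁻ᴸ` with `L` polynomial in `l` (by Hölder's
inequality), while `|K|` now exceeds any prescribed polynomial in `l`.

The polynomials `α (·, z)` vanish on `X`. Choose `n` polynomials `f i` among them, and directions
`e j`, whose `n × n` Jacobian determinant is nonzero on a large part of `X`, with `n` maximal. A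
weak Bezout inequality bounds the number of nondegenerate common zeros of `n` polynomials of degree
`d` on every translate of the span of the `e j` by `(d n + 1)ⁿ`; since `|K|` is large, this forces
`n ≤ 2 L`. By maximality, the bordered Jacobian determinant
`D w g = det J * ∂_w g - ∑ j, c j w * ∂_(e j) g` vanishes, for all `g` of the form `α (·, z)`, on a
large part of `X`. As `D w` is a derivation, this can be repeated for the polynomials `D w g`, once
for each variable other than `i₀`, and finally some point is left at which the iterated derivation
kills every `α (·, z)`. Expanding it by the Leibniz rule at that point, the terms involving only
the `∂_w` give a nonzero multiple of `α`, and the other ones, of which there are boundedly many,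
are products of forms in complementary sets of variables. A basis of `K` over `𝔽` brings the
resulting decomposition back to `𝔽`.
-/

namespace PartitionRank

open Finset MvPolynomial

section IsMultilinearOn

variable {ι R M M₂ M₃ : Type*} {V V' : ι → Type*} [CommSemiring R]
  [∀ i, AddCommMonoid (V i)] [∀ i, Module R (V i)] [∀ i, AddCommMonoid (V' i)]
  [∀ i, Module R (V' i)] [AddCommMonoid M] [Module R M] [AddCommMonoid M₂] [Module R M₂]
  [AddCommMonoid M₃] [Module R M₃] {I J : Finset ι}

variable (R) in
/-- `Φ v` depends on the variables `v i`, `i ∈ I`, only, and is multilinear in them. -/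
def IsMultilinearOn (I : Finset ι) (Φ : (∀ i, V i) → M) : Prop :=
  ∃ f : MultilinearMap R (fun i : I ↦ V i) M, ∀ v, Φ v = f (I.restrict v)

namespace IsMultilinearOn

variable {Φ : (∀ i, V i) → M} {Ψ : (∀ i, V i) → M₂}

theorem linearMap_comp (hΦ : IsMultilinearOn R I Φ) (f : M →ₗ[R] M₂) :
    IsMultilinearOn R I fun v ↦ f (Φ v) := by
  obtain ⟨g, hg⟩ := hΦ
  exact ⟨f.compMultilinearMap g, fun v ↦ congrArg f (hg v)⟩

theorem comp_linearMap (hΦ : IsMultilinearOn R I Φ) (e : ∀ i, V' i →ₗ[R] V i) :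
    IsMultilinearOn R I fun v ↦ Φ fun i ↦ e i (v i) := by
  obtain ⟨f, hf⟩ := hΦ
  exact ⟨f.compLinearMap fun i : I ↦ e i, fun v ↦ hf _⟩

variable (R V) in
theorem const (m : M) : IsMultilinearOn R ∅ fun _ : ∀ i, V i ↦ m :=
  ⟨MultilinearMap.constOfIsEmpty R _ m, fun _ ↦ rfl⟩

variable (R V) in
theorem eval (i : ι) : IsMultilinearOn R {i} fun v : ∀ i, V i ↦ v i := by
  classical
  let i' : ({i} : Finset ι) := ⟨i, mem_singleton_self i⟩
  exact ⟨.mk' (fun v ↦ v i') (fun v j a b ↦ by obtain rfl := Subsingleton.elim i' j; simp)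
    (fun v j c a ↦ by obtain rfl := Subsingleton.elim i' j; simp), fun v ↦ rfl⟩

theorem bilinear [DecidableEq ι] (hΦ : IsMultilinearOn R I Φ) (hΨ : IsMultilinearOn R J Ψ)
    (hIJ : Disjoint I J) (B : M →ₗ[R] M₂ →ₗ[R] M₃) :
    IsMultilinearOn R (I ∪ J) fun v ↦ B (Φ v) (Ψ v) := by
  obtain ⟨f, hf⟩ := hΦ
  obtain ⟨g, hg⟩ := hΨ
  have update_mem {T : Finset ι} (hT : T ⊆ I ∪ J) (v : ∀ i : ↥(I ∪ J), V i) (i : ↥(I ∪ J))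
      (hi : i.1 ∈ T) (a : V i) :
      restrict₂ hT (Function.update v i a) = Function.update (restrict₂ hT v) ⟨i, hi⟩ a :=
    Function.update_comp_eq_of_injective' v (f := fun j : T ↦ (⟨j, hT j.2⟩ : ↥(I ∪ J)))
      (fun _ _ h ↦ Subtype.ext (congrArg (fun j : ↥(I ∪ J) ↦ j.1) h)) ⟨i, hi⟩ a
  have update_notMem {T : Finset ι} (hT : T ⊆ I ∪ J) (v : ∀ i : ↥(I ∪ J), V i) (i : ↥(I ∪ J))
      (hi : i.1 ∉ T) (a : V i) : restrict₂ hT (Function.update v i a) = restrict₂ hT v :=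
    Function.update_comp_eq_of_forall_ne' v a (α' := T) fun j h ↦ hi (h ▸ j.2)
  have hcases (i : ↥(I ∪ J)) : i.1 ∈ I ∧ i.1 ∉ J ∨ i.1 ∉ I ∧ i.1 ∈ J := by
    have := mem_union.1 i.2
    have := fun h : i.1 ∈ I ↦ disjoint_left.1 hIJ h
    tauto
  refine ⟨.mk' (fun v ↦ B (f (restrict₂ subset_union_left v)) (g (restrict₂ subset_union_right v)))
    (fun v i a b ↦ ?_) (fun v i c a ↦ ?_), fun v ↦ by simp only [hf, hg]; rfl⟩
  all_goals
    obtain ⟨hi, hj⟩ | ⟨hi, hj⟩ := hcases i <;>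
    simp [update_mem, update_notMem, hi, hj]

theorem insert_bilinear [DecidableEq ι] {i : ι} (hΨ : IsMultilinearOn R J Ψ) (hi : i ∉ J)
    (B : V i →ₗ[R] M₂ →ₗ[R] M₃) : IsMultilinearOn R (insert i J) fun v ↦ B (v i) (Ψ v) := by
  rw [insert_eq]
  exact (IsMultilinearOn.eval R V i).bilinear hΨ (disjoint_singleton_left.2 hi) B

end IsMultilinearOn

end IsMultilinearOn

theorem IsMultilinearOn.restrictScalars {ι F K M : Type*} {V : ι → Type*} [CommSemiring F]
    [CommSemiring K] [Algebra F K] [∀ i, AddCommMonoid (V i)] [∀ i, Module F (V i)]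
    [∀ i, Module K (V i)] [∀ i, IsScalarTower F K (V i)] [AddCommMonoid M] [Module F M]
    [Module K M] [IsScalarTower F K M] {I : Finset ι} {Φ : (∀ i, V i) → M}
    (hΦ : IsMultilinearOn K I Φ) : IsMultilinearOn F I Φ :=
  let ⟨f, hf⟩ := hΦ
  ⟨f.restrictScalars F, hf⟩

section RankLE

variable {ι K : Type*} {V V' : ι → Type*} [Fintype ι] [DecidableEq ι] [CommSemiring K]
  [∀ i, AddCommMonoid (V i)] [∀ i, Module K (V i)] [∀ i, AddCommMonoid (V' i)]
  [∀ i, Module K (V' i)] {i₀ : ι}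

variable (K i₀) in
/-- `Φ` is a product `β (x_I) * γ (x_{Iᶜ})` of two multilinear forms, where `I` is nonempty and
avoids the index `i₀`. -/
def IsReducible (Φ : (∀ i, V i) → K) : Prop :=
  ∃ I : Finset ι, I.Nonempty ∧ i₀ ∉ I ∧ ∃ β γ : (∀ i, V i) → K,
    IsMultilinearOn K I β ∧ IsMultilinearOn K Iᶜ γ ∧ Φ = β * γ

variable (K i₀) in
/-- `Φ` has partition rank at most `r`, in the strong sense that one factor of each of its
reducible summands does not involve the variable of index `i₀`. -/
def RankLE (r : ℕ) (Φ : (∀ i, V i) → K) : Prop :=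
  ∃ l : List ((∀ i, V i) → K), l.length ≤ r ∧ (∀ Ψ ∈ l, IsReducible K i₀ Ψ) ∧ l.sum = Φ

variable {r r' : ℕ} {Φ Ψ : (∀ i, V i) → K}

theorem IsReducible.rankLE_one (hΦ : IsReducible K i₀ Φ) : RankLE K i₀ 1 Φ :=
  ⟨[Φ], le_rfl, by simpa using hΦ, List.sum_singleton⟩

namespace RankLE

variable (K V i₀ r) in
theorem zero : RankLE K i₀ r (0 : (∀ i, V i) → K) :=
  ⟨[], Nat.zero_le r, by simp, rfl⟩

theorem mono (hΦ : RankLE K i₀ r Φ) (h : r ≤ r') : RankLE K i₀ r' Φ :=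
  let ⟨l, hl, hred, hsum⟩ := hΦ
  ⟨l, hl.trans h, hred, hsum⟩

theorem add (hΦ : RankLE K i₀ r Φ) (hΨ : RankLE K i₀ r' Ψ) : RankLE K i₀ (r + r') (Φ + Ψ) := by
  obtain ⟨l, hl, hred, rfl⟩ := hΦ
  obtain ⟨l', hl', hred', rfl⟩ := hΨ
  exact ⟨l ++ l', by rw [List.length_append]; lia,
    fun Θ hΘ ↦ (List.mem_append.1 hΘ).elim (hred Θ) (hred' Θ), List.sum_append⟩

theorem sum {τ : Type*} {t : Finset τ} {Φ : τ → (∀ i, V i) → K}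
    (h : ∀ j ∈ t, RankLE K i₀ r (Φ j)) : RankLE K i₀ (#t * r) (∑ j ∈ t, Φ j) := by
  classical
  induction t using Finset.induction_on with
  | empty => exact zero K V i₀ _
  | insert j t hj ih =>
    rw [sum_insert hj, card_insert_of_notMem hj, add_one_mul, add_comm (#t * r)]
    exact (h j (mem_insert_self j t)).add (ih fun i hi ↦ h i (mem_insert_of_mem hi))

theorem map {F : Type*} {U : ι → Type*} [CommSemiring F] [∀ i, AddCommMonoid (U i)]
    [∀ i, Module F (U i)] {m : ℕ} (hΦ : RankLE K i₀ r Φ)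
    (T : ((∀ i, V i) → K) →+ ((∀ i, U i) → F))
    (hT : ∀ Ψ, IsReducible K i₀ Ψ → RankLE F i₀ m (T Ψ)) : RankLE F i₀ (r * m) (T Φ) := by
  obtain ⟨l, hl, hred, rfl⟩ := hΦ
  refine mono (r := l.length * m) ?_ (Nat.mul_le_mul_right m hl)
  clear hl
  induction l with
  | nil => simpa using zero F U i₀ 0
  | cons Ψ l ih =>
    rw [List.forall_mem_cons] at hred
    rw [List.sum_cons, map_add, List.length_cons, add_one_mul, add_comm (_ * m)]
    exact (hT Ψ hred.1).add (ih hred.2)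

theorem const_mul (hΦ : RankLE K i₀ r Φ) (c : K) : RankLE K i₀ r fun v ↦ c * Φ v := by
  have h := hΦ.map (m := 1) ((AddMonoidHom.mulLeft c).compLeft (∀ i, V i)) ?_
  · rwa [mul_one] at h
  rintro _ ⟨I, hI, hi₀, β, γ, hβ, hγ, rfl⟩
  exact IsReducible.rankLE_one ⟨I, hI, hi₀, fun v ↦ c * β v, γ,
    hβ.linearMap_comp (LinearMap.mulLeft K c), hγ, funext fun v ↦ (mul_assoc _ _ _).symm⟩

theorem comp_linearMap (hΦ : RankLE K i₀ r Φ) (e : ∀ i, V' i →ₗ[K] V i) :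
    RankLE K i₀ r fun v ↦ Φ fun i ↦ e i (v i) := by
  have h := hΦ.map (m := 1)
    (⟨⟨fun Ψ v ↦ Ψ fun i ↦ e i (v i), rfl⟩, fun _ _ ↦ rfl⟩ :
      ((∀ i, V i) → K) →+ ((∀ i, V' i) → K)) ?_
  · rwa [mul_one] at h
  rintro _ ⟨I, hI, hi₀, β, γ, hβ, hγ, rfl⟩
  exact IsReducible.rankLE_one ⟨I, hI, hi₀, _, _, hβ.comp_linearMap e, hγ.comp_linearMap e, rfl⟩

theorem exists_multilinearMap (hΦ : RankLE K i₀ r Φ) :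
    ∃ r' ≤ r, ∃ (I : Fin r' → Finset ι) (β : ∀ i, MultilinearMap K (fun j : I i ↦ V j) K)
      (γ : ∀ i, MultilinearMap K (fun j : ↥(I i)ᶜ ↦ V j) K), (∀ i, (I i).Nonempty ∧ i₀ ∉ I i) ∧
      ∀ v, Φ v = ∑ i, β i ((I i).restrict v) * γ i ((I i)ᶜ.restrict v) := by
  obtain ⟨l, hl, hred, rfl⟩ := hΦ
  choose I hI hi₀ β γ hβ hγ hmul using fun i : Fin l.length ↦ hred _ (l.get_mem i)
  choose β' hβ' using hβ
  choose γ' hγ' using hγ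
  refine ⟨l.length, hl, I, β', γ', fun i ↦ ⟨hI i, hi₀ i⟩, fun v ↦ ?_⟩
  calc l.sum v = (∑ i, l.get i) v := by rw [← List.sum_ofFn, List.ofFn_get]
    _ = _ := by simp only [Finset.sum_apply, hmul, Pi.mul_apply, hβ', hγ']

end RankLE

end RankLE

section iterDeriv

variable {ι K W A : Type*} [CommRing K] [AddCommGroup W] [Module K W] [CommRing A]
  [Algebra K A]

/-- The composite of the derivations `D (v i)`, for the successive pairs `(i, D)` of the list; the
head of the list is applied first. -/
def iterDeriv (v : ι → W) : List (ι × (W →ₗ[K] Derivation K A A)) → A →ₗ[K] A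
  | [] => LinearMap.id
  | p :: l => iterDeriv v l ∘ₗ (p.2 (v p.1)).toLinearMap

@[simp]
theorem iterDeriv_nil (v : ι → W) :
    iterDeriv v ([] : List (ι × (W →ₗ[K] Derivation K A A))) = LinearMap.id :=
  rfl

@[simp]
theorem iterDeriv_cons (v : ι → W) (p : ι × (W →ₗ[K] Derivation K A A))
    (l : List (ι × (W →ₗ[K] Derivation K A A))) (g : A) :
    iterDeriv v (p :: l) g = iterDeriv v l (p.2 (v p.1) g) :=
  rfl

theorem IsMultilinearOn.derivation [DecidableEq ι] {i : ι} {T : Finset ι} {h : (ι → W) → A}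
    (hh : IsMultilinearOn K T h) (hi : i ∉ T) (D : W →ₗ[K] Derivation K A A) :
    IsMultilinearOn K (insert i T) fun v ↦ D (v i) (h v) :=
  hh.insert_bilinear hi <| LinearMap.mk₂ K (fun w g ↦ D w g) (by simp) (by simp) (by simp) (by simp)

/-- The list `l` enumerates, without repetition, the elements outside `T`. -/
def Enumerates [Fintype ι] [DecidableEq ι] : List ι → Finset ι → Prop
  | [], T => T = univ
  | i :: l, T => i ∉ T ∧ Enumerates l (insert i T)

theorem exists_enumerates [Fintype ι] [DecidableEq ι] (T : Finset ι) :
    ∃ l, Enumerates l T ∧ l.length = #Tᶜ := by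
  induction h : #Tᶜ generalizing T with
  | zero => exact ⟨[], by simpa [Enumerates] using h, rfl⟩
  | succ n ih =>
    obtain ⟨i, hi⟩ : (Tᶜ).Nonempty := by rw [← card_pos]; lia
    obtain ⟨l, hl, hlen⟩ := ih (insert i T) (by rw [compl_insert, card_erase_of_mem hi]; lia)
    exact ⟨i :: l, ⟨mem_compl.1 hi, hl⟩, by simp [hlen]⟩

/-- Up to derivations with coefficients linear in `w`, of which there are at most `R`, the
derivation `D w` is a multiple of `D₀ w` by a function that does not vanish at the point `φ`. -/
def IsPerturbedMultiple (φ : A →ₐ[K] K) (R : ℕ) (D₀ D : W →ₗ[K] Derivation K A A) : Prop :=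
  ∃ a, φ a ≠ 0 ∧ ∃ r ≤ R, ∃ (c : Fin r → W →ₗ[K] A) (E : Fin r → Derivation K A A),
    ∀ w g, D w g = a * D₀ w g + ∑ j, c j w * E j g

theorem IsPerturbedMultiple.mono {φ : A →ₐ[K] K} {R R' : ℕ} {D₀ D : W →ₗ[K] Derivation K A A}
    (h : IsPerturbedMultiple φ R D₀ D) (hR : R ≤ R') : IsPerturbedMultiple φ R' D₀ D := by
  obtain ⟨a, ha, r, hr, h⟩ := h
  exact ⟨a, ha, r, hr.trans hR, h⟩

variable [Fintype ι] [DecidableEq ι] {i₀ : ι} (φ : A →ₐ[K] K)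

theorem rankLE_iterDeriv_mul (l : List (ι × (W →ₗ[K] Derivation K A A))) {I J : Finset ι}
    {g h : (ι → W) → A} (hg : IsMultilinearOn K I g) (hh : IsMultilinearOn K J h)
    (hIJ : Disjoint I J) (hI : I.Nonempty) (hi₀ : i₀ ∈ J)
    (hl : Enumerates (l.map Prod.fst) (I ∪ J)) :
    RankLE K i₀ (2 ^ l.length) fun v ↦ φ (iterDeriv v l (g v * h v)) := by
  induction l generalizing I J g h with
  | nil =>
    have hJ : Iᶜ = J := (IsCompl.of_eq (disjoint_iff.1 hIJ) hl).compl_eq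
    refine IsReducible.rankLE_one ⟨I, hI, disjoint_right.1 hIJ hi₀,
      fun v ↦ φ (g v), fun v ↦ φ (h v), hg.linearMap_comp φ.toLinearMap,
      hJ ▸ hh.linearMap_comp φ.toLinearMap, ?_⟩
    exact funext fun v ↦ map_mul φ _ _
  | cons p l ih =>
    obtain ⟨i, D⟩ := p
    obtain ⟨hi, hl⟩ := hl
    rw [mem_union, not_or] at hi
    have h₁ := ih hg (hh.derivation hi.2 D) (disjoint_insert_right.2 ⟨hi.1, hIJ⟩) hI
      (mem_insert_of_mem hi₀) (by rwa [union_insert])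
    have h₂ := ih (hg.derivation hi.1 D) hh (disjoint_insert_left.2 ⟨hi.2, hIJ⟩)
      (insert_nonempty i I) hi₀ (by rwa [insert_union])
    convert h₁.add h₂ using 1
    · rw [List.length_cons, pow_succ, mul_two]
    · funext v
      simp [mul_comm (h v)]

theorem rankLE_iterDeriv_const_mul (l : List (ι × (W →ₗ[K] Derivation K A A))) (a : A)
    {T : Finset ι} {h : (ι → W) → A} (hh : IsMultilinearOn K T h) (hi₀ : i₀ ∈ T)
    (hl : Enumerates (l.map Prod.fst) T) :
    RankLE K i₀ (2 ^ l.length) fun v ↦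
      φ (iterDeriv v l (a * h v)) - φ a * φ (iterDeriv v l (h v)) := by
  induction l generalizing T h with
  | nil => simpa [Pi.zero_def] using RankLE.zero K (fun _ ↦ W) i₀ 1
  | cons p l ih =>
    obtain ⟨i, D⟩ := p
    obtain ⟨hi, hl⟩ := hl
    have h₁ := ih (hh.derivation hi D) (mem_insert_of_mem hi₀) hl
    have h₂ := rankLE_iterDeriv_mul φ l
      ((IsMultilinearOn.const K (fun _ ↦ W) a).derivation (notMem_empty i) D) hh
      (by simpa using hi) (insert_nonempty i ∅) hi₀ (by rwa [insert_union, empty_union])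
    convert h₁.add h₂ using 1
    · rw [List.length_cons, pow_succ, mul_two]
    · funext v
      simp only [iterDeriv_cons, Derivation.leibniz, smul_eq_mul, mul_comm (h v), map_add,
        Pi.add_apply]
      ring

theorem exists_rankLE_iterDeriv_sub {R : ℕ} {D₀ : W →ₗ[K] Derivation K A A} [IsDomain K]
    (l : List (ι × (W →ₗ[K] Derivation K A A))) (hR : ∀ p ∈ l, IsPerturbedMultiple φ R D₀ p.2)
    {T : Finset ι} {h : (ι → W) → A} (hh : IsMultilinearOn K T h) (hi₀ : i₀ ∈ T)
    (hl : Enumerates (l.map Prod.fst) T) :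
    ∃ P : K, P ≠ 0 ∧ RankLE K i₀ (l.length * (2 ^ l.length * (R + 1))) fun v ↦
      φ (iterDeriv v l (h v)) - P * φ (iterDeriv v (l.map fun p ↦ (p.1, D₀)) (h v)) := by
  induction l generalizing T h with
  | nil => exact ⟨1, one_ne_zero, by simpa [Pi.zero_def] using RankLE.zero K (fun _ ↦ W) i₀ 0⟩
  | cons p l ih =>
    obtain ⟨i, D⟩ := p
    obtain ⟨hi, hl⟩ := hl
    rw [List.forall_mem_cons] at hR
    obtain ⟨⟨a, ha, r, hr, c, E, hD⟩, hR⟩ := hR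
    have hi₀' : i₀ ∈ insert i T := mem_insert_of_mem hi₀
    obtain ⟨P, hP, hmain⟩ := ih hR (hh.derivation hi D₀) hi₀' hl
    have hconst := rankLE_iterDeriv_const_mul φ l a (hh.derivation hi D₀) hi₀' hl
    have hsum : RankLE K i₀ (r * 2 ^ l.length)
        (∑ j, fun v ↦ φ (iterDeriv v l (c j (v i) * E j (h v)))) := by
      simpa using RankLE.sum (t := univ) fun j _ ↦ rankLE_iterDeriv_mul φ l
        ((IsMultilinearOn.eval K (fun _ ↦ W) i).linearMap_comp (c j))
        (hh.linearMap_comp (E j).toLinearMap) (disjoint_singleton_left.2 hi)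
        (singleton_nonempty i) hi₀ (by rwa [← insert_eq])
    refine ⟨φ a * P, mul_ne_zero ha hP, ?_⟩
    convert ((hconst.add hsum).add (hmain.const_mul (φ a))).mono ?_ using 1
    · funext v
      simp only [iterDeriv_cons, hD, map_add, map_sum, List.map_cons, Pi.add_apply,
        Finset.sum_apply]
      ring
    · have := Nat.mul_le_mul_right (2 ^ l.length) hr
      rw [List.length_cons, pow_succ]
      nlinarith [Nat.zero_le ((l.length + 1) * (2 ^ l.length * (R + 1)))]

end iterDeriv

section dirDeriv

variable {σ ι K A : Type*} [CommRing K]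

/-- The derivative `∑ i, w i * ∂ / ∂ X i` of polynomials in the direction `w`. -/
noncomputable def dirDeriv : (σ → K) →ₗ[K] Derivation K (MvPolynomial σ K) (MvPolynomial σ K) :=
  (mkDerivationEquiv K).toLinearMap ∘ₗ (Algebra.linearMap K (MvPolynomial σ K)).compLeft σ

theorem dirDeriv_apply (w : σ → K) :
    dirDeriv w = mkDerivation K (fun i ↦ C (w i) : σ → MvPolynomial σ K) :=
  rfl

@[simp]
theorem dirDeriv_X (w : σ → K) (i : σ) : dirDeriv w (X i) = C (w i) :=
  mkDerivation_X ..

theorem totalDegree_dirDeriv_le (w : σ → K) (p : MvPolynomial σ K) :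
    (dirDeriv w p).totalDegree ≤ p.totalDegree := by
  conv_lhs => rw [p.as_sum, map_sum]
  refine totalDegree_finsetSum_le fun m hm ↦ le_trans ?_ (le_totalDegree hm)
  rw [dirDeriv_apply, mkDerivation_monomial]
  refine (totalDegree_smul_le _ _).trans <| totalDegree_finsetSum_le fun i _ ↦ ?_
  beta_reduce
  rw [smul_eq_mul]
  refine (totalDegree_mul _ _).trans ?_
  rw [totalDegree_C, add_zero]
  exact (totalDegree_monomial_le _ _).trans (Finsupp.degree_mono tsub_le_self)

theorem totalDegree_det_le [Fintype ι] [DecidableEq ι] {M : Matrix ι ι (MvPolynomial σ K)} {d : ℕ}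
    (hM : ∀ i j, (M i j).totalDegree ≤ d) : M.det.totalDegree ≤ Fintype.card ι * d := by
  rw [Matrix.det_apply]
  refine totalDegree_finsetSum_le fun s _ ↦ ?_
  calc (Equiv.Perm.sign s • ∏ i, M (s i) i).totalDegree
      ≤ (∏ i, M (s i) i).totalDegree := totalDegree_smul_le _ _
    _ ≤ ∑ i, (M (s i) i).totalDegree := totalDegree_finsetProd _ _
    _ ≤ ∑ _ : ι, d := sum_le_sum fun i _ ↦ hM (s i) i
    _ = Fintype.card ι * d := by simp

theorem totalDegree_adjugate_le [Fintype ι] [DecidableEq ι] {M : Matrix ι ι (MvPolynomial σ K)}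
    {d : ℕ} (hM : ∀ i j, (M i j).totalDegree ≤ d) (i j : ι) :
    (M.adjugate i j).totalDegree ≤ Fintype.card ι * d := by
  rw [Matrix.adjugate_apply]
  refine totalDegree_det_le fun i' j' ↦ ?_
  rw [Matrix.updateRow_apply, Pi.single_apply]
  split_ifs <;> simp [hM]

theorem totalDegree_aeval_le {g : σ → MvPolynomial ι K} (hg : ∀ i, (g i).totalDegree ≤ 1)
    (p : MvPolynomial σ K) : (aeval g p).totalDegree ≤ p.totalDegree := by
  rw [aeval_def, eval₂_eq]
  refine totalDegree_finsetSum_le fun m hm ↦ ?_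
  calc (algebraMap K (MvPolynomial ι K) (coeff m p) * ∏ i ∈ m.support, g i ^ m i).totalDegree
      ≤ (∏ i ∈ m.support, g i ^ m i).totalDegree := by
        rw [algebraMap_eq, C_mul']
        exact totalDegree_smul_le _ _
    _ ≤ ∑ i ∈ m.support, (g i ^ m i).totalDegree := totalDegree_finsetProd _ _
    _ ≤ ∑ i ∈ m.support, m i := sum_le_sum fun i _ ↦
        (totalDegree_pow _ _).trans (mul_le_of_le_one_right' (hg i))
    _ ≤ p.totalDegree := le_totalDegree hm

end dirDeriv

section affineRestriction

variable {σ ι K : Type*} [CommRing K] [Fintype ι] (x : σ → K) (e : ι → σ → K)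

/-- Restriction of polynomials to the affine subspace through `x` with directions `e j`. -/
noncomputable def affineRestriction : MvPolynomial σ K →ₐ[K] MvPolynomial ι K :=
  aeval fun s ↦ C (x s) + ∑ j, C (e j s) * X j

theorem eval_affineRestriction (u : ι → K) (p : MvPolynomial σ K) :
    eval u (affineRestriction x e p) = eval (x + ∑ j, u j • e j) p := by
  simp only [← coe_aeval_eq_eval, RingHom.coe_coe, affineRestriction]
  rw [comp_aeval_apply]
  congr
  funext s
  simp [mul_comm]

theorem dirDeriv_affineRestriction (w : ι → K) (p : MvPolynomial σ K) :
    dirDeriv w (affineRestriction x e p) =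
      affineRestriction x e (dirDeriv (∑ j, w j • e j) p) := by
  induction p using MvPolynomial.induction_on with
  | C a => simp [affineRestriction, algebraMap_eq]
  | add p q hp hq => simp only [map_add, hp, hq]
  | mul_X p i hp =>
    rw [map_mul, Derivation.leibniz, hp, Derivation.leibniz]
    simp only [dirDeriv_X, smul_eq_mul, map_add, map_mul]
    simp [affineRestriction, algebraMap_eq, mul_comm]

theorem totalDegree_affineRestriction_le (p : MvPolynomial σ K) :
    (affineRestriction x e p).totalDegree ≤ p.totalDegree := by
  refine totalDegree_aeval_le (fun s ↦ (totalDegree_add _ _).trans <|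
    max_le (by simp) <| totalDegree_finsetSum_le fun j _ ↦ ?_) p
  rw [C_mul', X]
  exact (totalDegree_smul_le _ _).trans ((totalDegree_monomial_le _ _).trans (by simp))

end affineRestriction

theorem coeff_mul_prod_pow {ι A : Type*} [Fintype ι] [CommRing A] (G : Polynomial A)
    {F : ι → Polynomial A} (hF : ∀ i, (F i).coeff 0 = 0) {n : ℕ} {b : ι → ℕ} (hb : n ≤ ∑ i, b i) :
    (G * ∏ i, F i ^ b i).coeff n =
      if ∑ i, b i = n then G.coeff 0 * ∏ i, (F i).coeff 1 ^ b i else 0 := by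
  obtain ⟨g, rfl⟩ : ∃ g : ι → Polynomial A, F = fun i ↦ Polynomial.X * g i :=
    ⟨fun i ↦ (F i).divX, funext fun i ↦ by simpa [hF] using (Polynomial.X_mul_divX_add (F i)).symm⟩
  have hprod : G * ∏ i, (Polynomial.X * g i) ^ b i =
      Polynomial.X ^ (∑ i, b i) * (G * ∏ i, g i ^ b i) := by
    simp only [mul_pow, prod_mul_distrib, prod_pow_eq_pow_sum, mul_left_comm]
  rw [hprod, Polynomial.coeff_X_pow_mul']
  obtain rfl | hlt := hb.eq_or_lt
  · simp [Polynomial.coeff_zero_eq_eval_zero, Polynomial.eval_prod]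
  · rw [if_neg hlt.not_ge, if_neg hlt.ne']

section Jacobian

variable {σ ι K A : Type*} [Fintype ι]

section CommRing

variable [CommRing K] [CommRing A] [Algebra K A]

/-- The expansion of a polynomial at `z` along the line with direction `∑ j, L j * e j`, as a
polynomial in the parameter of the line. -/
noncomputable def lineExpansion (z : σ → K) (e : ι → σ → K) (L : ι → A) :
    MvPolynomial σ K →ₐ[K] Polynomial A :=
  aeval fun s ↦ Polynomial.C (algebraMap K A (z s)) +
    Polynomial.X * Polynomial.C (∑ j, algebraMap K A (e j s) * L j)

theorem coeff_zero_lineExpansion (z : σ → K) (e : ι → σ → K) (L : ι → A) (p : MvPolynomial σ K) :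
    (lineExpansion z e L p).coeff 0 = algebraMap K A (eval z p) := by
  induction p using MvPolynomial.induction_on with
  | C a => simp [lineExpansion, Polynomial.algebraMap_apply]
  | add p q hp hq => simp [hp, hq]
  | mul_X p s hp =>
    rw [map_mul, Polynomial.mul_coeff_zero, hp]
    simp [lineExpansion]

theorem coeff_one_lineExpansion (z : σ → K) (e : ι → σ → K) (L : ι → A) (p : MvPolynomial σ K) :
    (lineExpansion z e L p).coeff 1 =
      ∑ j, algebraMap K A (eval z (dirDeriv (e j) p)) * L j := by
  induction p using MvPolynomial.induction_on with
  | C a => simp [lineExpansion, Polynomial.algebraMap_apply]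
  | add p q hp hq => simp [hp, hq, add_mul, sum_add_distrib]
  | mul_X p s hp =>
    rw [map_mul, Polynomial.mul_coeff_one, hp, coeff_zero_lineExpansion]
    simp only [lineExpansion, map_sum, map_mul, mul_sum, aeval_X, Polynomial.coeff_add,
      Polynomial.coeff_C_succ, Polynomial.finsetSum_coeff, Polynomial.coeff_X_mul,
      Polynomial.mul_coeff_zero, Polynomial.coeff_C_zero, zero_add, Polynomial.coeff_X_zero,
      zero_mul, sum_const_zero, add_zero, sum_mul, ← sum_add_distrib, Derivation.leibniz,
      dirDeriv_X, smul_eq_mul, map_add, eval_C, eval_X]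
    exact sum_congr rfl fun j _ ↦ by ring

variable [DecidableEq ι]

/-- The matrix of the derivatives of the polynomials `f i` in the directions `e j`. -/
noncomputable def jacobian (e : ι → σ → K) (f : ι → MvPolynomial σ K) :
    Matrix ι ι (MvPolynomial σ K) :=
  .of fun i j ↦ dirDeriv (e j) (f i)

/-- A common zero of the polynomials `f i` at which the determinant of their derivatives in the
directions `e j` does not vanish. -/
def IsNonsingularZero (e : ι → σ → K) (f : ι → MvPolynomial σ K) (z : σ → K) : Prop :=
  (∀ i, eval z (f i) = 0) ∧ eval z (jacobian e f).det ≠ 0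

end CommRing

variable [Field K] [DecidableEq ι] {e : ι → σ → K} {f : ι → MvPolynomial σ K} {z : σ → K}

/- Along the line whose parameters are the images of the variables under the inverse of the
Jacobian matrix at `z`, the polynomial `f i` expands as `T * X i + O(T ^ 2)`. -/
theorem IsNonsingularZero.exists_linearMap (hz : IsNonsingularZero e f z) (a : ι → ℕ) :
    ∃ T : MvPolynomial σ K →ₗ[K] K, ∀ (p : MvPolynomial σ K) (b : ι → ℕ), ∑ i, a i ≤ ∑ i, b i →
      T (p * ∏ i, f i ^ b i) = if b = a then eval z p else 0 := by
  let M : Matrix ι ι K := (eval z).mapMatrix (jacobian e f)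
  have hM : IsUnit M.det := by
    rw [isUnit_iff_ne_zero, ← RingHom.map_det]
    exact hz.2
  let L (j : ι) : MvPolynomial ι K := ∑ k, C (M⁻¹ j k) * X k
  have hzero (i : ι) : (lineExpansion z e L (f i)).coeff 0 = 0 := by
    rw [coeff_zero_lineExpansion, hz.1 i, map_zero]
  have hone (i : ι) : (lineExpansion z e L (f i)).coeff 1 = X i := by
    calc (lineExpansion z e L (f i)).coeff 1 = ∑ k, C ((M * M⁻¹) i k) * X k := by
          simp only [coeff_one_lineExpansion, L, M, Matrix.mul_apply, map_sum, sum_mul, mul_sum,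
            C_mul, mul_assoc]
          exact sum_comm
      _ = X i := by simp [Matrix.mul_nonsing_inv _ hM, Matrix.one_apply]
  refine ⟨lcoeff K (Finsupp.equivFunOnFinite.symm a) ∘ₗ
    (Polynomial.lcoeff (MvPolynomial ι K) (∑ i, a i)).restrictScalars K ∘ₗ
    (lineExpansion z e L).toLinearMap, fun p b hab ↦ ?_⟩
  have hmonomial : ∏ i, (X i : MvPolynomial ι K) ^ b i =
      monomial (Finsupp.equivFunOnFinite.symm b) 1 := by
    simp [monomial_eq, Finsupp.prod_fintype]
  simp only [LinearMap.comp_apply, AlgHom.toLinearMap_apply, map_mul, map_prod, map_pow,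
    LinearMap.restrictScalars_apply, Polynomial.lcoeff_apply,
    coeff_mul_prod_pow _ hzero hab, hone, coeff_zero_lineExpansion, hmonomial]
  by_cases hba : b = a
  · simp [hba, algebraMap_eq]
  · split_ifs <;> simp [hba, algebraMap_eq, coeff_monomial]

theorem linearIndependent_mul_prod_pow {Z : Set (σ → K)} (hZ : ∀ z ∈ Z, IsNonsingularZero e f z)
    {δ : (σ → K) → MvPolynomial σ K} (hδ : ∀ z ∈ Z, eval z (δ z) ≠ 0)
    (hδ' : ∀ z ∈ Z, ∀ z' ∈ Z, z ≠ z' → eval z (δ z') = 0) :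
    LinearIndependent K fun p : Z × (ι → ℕ) ↦ δ p.1 * ∏ i, f i ^ p.2 i := by
  classical
  rw [linearIndependent_iff']
  intro t c hc
  by_contra! hne
  obtain ⟨⟨⟨z, hz⟩, a⟩, hp₀, hmin⟩ := exists_min_image {p ∈ t | c p ≠ 0} (fun p ↦ ∑ i, p.2 i)
    (hne.imp fun p hp ↦ mem_filter.2 hp)
  rw [mem_filter] at hp₀
  obtain ⟨T, hT⟩ := (hZ z hz).exists_linearMap a
  have hterm : ∀ p ∈ t, p ≠ (⟨z, hz⟩, a) → c p * T (δ p.1 * ∏ i, f i ^ p.2 i) = 0 := by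
    rintro ⟨⟨z', hz'⟩, b⟩ hp hp_ne
    by_cases hcp : c (⟨z', hz'⟩, b) = 0
    · rw [hcp, zero_mul]
    rw [hT _ _ (hmin _ (mem_filter.2 ⟨hp, hcp⟩))]
    split_ifs with hba
    · rw [hδ' z hz z' hz' fun h ↦ hp_ne (by simp_all), mul_zero]
    · rw [mul_zero]
  have hsum := congrArg T hc
  simp only [map_sum, map_smul, map_zero, smul_eq_mul] at hsum
  rw [sum_eq_single_of_mem _ hp₀.1 hterm, hT _ _ le_rfl, if_pos rfl] at hsum
  exact mul_ne_zero hp₀.2 (hδ z hz) hsum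

end Jacobian

section Bezout

variable {σ ι K : Type*} [Field K] [Fintype ι]

theorem finrank_restrictDegree_le (N : ℕ) :
    Module.finrank K (restrictDegree ι K N) ≤ (N + 1) ^ Fintype.card ι := by
  have hbasis : Module.finrank K (restrictDegree ι K N) = Nat.card {n : ι →₀ ℕ | ∀ i, n i ≤ N} :=
    Module.finrank_eq_nat_card_basis (basisRestrictSupport K _)
  rw [hbasis]
  have hinj : Function.Injective fun (n : {n : ι →₀ ℕ | ∀ i, n i ≤ N}) (i : ι) ↦
      (⟨n.1 i, Nat.lt_succ_of_le (n.2 i)⟩ : Fin (N + 1)) := fun m n h ↦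
    Subtype.ext <| Finsupp.ext fun i ↦ congrArg Fin.val (congrFun h i)
  exact (Nat.card_le_card_of_injective _ hinj).trans_eq (by simp [Nat.card_fun])

theorem indicator_mul_prod_pow_mem_restrictDegree [Fintype K]
    {f : ι → MvPolynomial ι K} {d : ℕ} (hd : ∀ i, (f i).totalDegree ≤ d) (z : ι → K)
    {b : ι → ℕ} (hb : ∀ i, b i < Fintype.card K) :
    indicator z * ∏ i, f i ^ b i ∈
      restrictDegree ι K ((d * Fintype.card ι + 1) * Fintype.card K - 1) := by
  classical
  rw [mem_restrictDegree_iff_sup]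
  intro k
  have hind : (indicator z).degreeOf k ≤ Fintype.card K - 1 := by
    rw [degreeOf_def]
    exact (mem_restrictDegree_iff_sup _ _ _).1 (indicator_mem_restrictDegree z) k
  have hpow (i : ι) : (f i ^ b i).degreeOf k ≤ (Fintype.card K - 1) * d :=
    (degreeOf_pow_le _ _ _).trans <|
      Nat.mul_le_mul (Nat.le_sub_one_of_lt (hb i)) ((degreeOf_le_totalDegree _ _).trans (hd i))
  rw [← degreeOf_def]
  calc (indicator z * ∏ i, f i ^ b i).degreeOf k
      ≤ (indicator z).degreeOf k + ∑ i, (f i ^ b i).degreeOf k :=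
        (degreeOf_mul_le _ _ _).trans (Nat.add_le_add_left (degreeOf_prod_le _ _ _) _)
    _ ≤ (Fintype.card K - 1) + ∑ _ : ι, (Fintype.card K - 1) * d :=
        add_le_add hind (sum_le_sum fun i _ ↦ hpow i)
    _ = (d * Fintype.card ι + 1) * (Fintype.card K - 1) := by
        rw [sum_const, card_univ, smul_eq_mul]; ring
    _ ≤ (d * Fintype.card ι + 1) * Fintype.card K - 1 := by
        rw [Nat.mul_sub_one]
        exact Nat.sub_le_sub_left (Nat.le_add_left 1 _) _

variable [DecidableEq ι]

theorem IsNonsingularZero.affineRestriction {e : ι → σ → K} {f : ι → MvPolynomial σ K}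
    {x : σ → K} {u : ι → K} (h : IsNonsingularZero e f (x + ∑ j, u j • e j)) :
    IsNonsingularZero (fun j ↦ Pi.single j 1) (fun i ↦ affineRestriction x e (f i)) u := by
  have hjac : jacobian (fun j ↦ Pi.single j 1) (fun i ↦ PartitionRank.affineRestriction x e (f i)) =
      (PartitionRank.affineRestriction x e).mapMatrix (jacobian e f) := by
    ext i j : 1
    simp [jacobian, dirDeriv_affineRestriction, Pi.single_apply, ite_smul]
  refine ⟨fun i ↦ by rw [eval_affineRestriction, h.1], ?_⟩
  rw [hjac, ← AlgHom.map_det, eval_affineRestriction]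
  exact h.2

theorem card_le_of_isNonsingularZero [Finite K] {e : ι → ι → K} {f : ι → MvPolynomial ι K} {d : ℕ}
    (hd : ∀ i, (f i).totalDegree ≤ d) {Z : Finset (ι → K)}
    (hZ : ∀ z ∈ Z, IsNonsingularZero e f z) :
    #Z ≤ (d * Fintype.card ι + 1) ^ Fintype.card ι := by
  have := Fintype.ofFinite K
  set n := Fintype.card ι
  set q := Fintype.card K
  have hq : 0 < q := Fintype.card_pos
  have hli := linearIndependent_mul_prod_pow (Z := (Z : Set (ι → K))) (δ := indicator) hZ
    (fun z _ ↦ by simp [eval_indicator_apply_eq_one])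
    (fun z _ z' _ h ↦ eval_indicator_apply_eq_zero z z' h)
  have hcoe : Function.Injective fun (b : ι → Fin q) (i : ι) ↦ (b i : ℕ) :=
    fun b b' h ↦ funext fun i ↦ Fin.ext (congrFun h i)
  have hmem (p : Z × (ι → Fin q)) : indicator (p.1 : ι → K) * ∏ i, f i ^ (p.2 i : ℕ) ∈
      restrictDegree ι K ((d * n + 1) * q - 1) :=
    indicator_mul_prod_pow_mem_restrictDegree hd p.1 fun i ↦ (p.2 i).2
  have hg := hli.comp (Prod.map id fun (b : ι → Fin q) i ↦ (b i : ℕ))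
    (Function.injective_id.prodMap hcoe)
  have hcard : #Z * q ^ n ≤ (d * n + 1) ^ n * q ^ n := by
    calc #Z * q ^ n = Fintype.card (Z × (ι → Fin q)) := by simp [n]
      _ ≤ ((d * n + 1) * q - 1 + 1) ^ n :=
        ((finrank_span_eq_card hg).ge.trans (Submodule.finrank_mono
          (Submodule.span_le.2 (Set.range_subset_iff.2 hmem)))).trans (finrank_restrictDegree_le _)
      _ = (d * n + 1) ^ n * q ^ n := by
        rw [Nat.sub_add_cancel (Nat.mul_pos (Nat.succ_pos _) hq), mul_pow]
  exact Nat.le_of_mul_le_mul_right hcard (pow_pos hq n)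

theorem card_mul_le_of_isNonsingularZero [Fintype σ] [Fintype K] {e : ι → σ → K}
    {f : ι → MvPolynomial σ K} {d : ℕ} (hd : ∀ i, (f i).totalDegree ≤ d) {Y : Finset (σ → K)}
    (hY : ∀ x ∈ Y, IsNonsingularZero e f x) :
    #Y * Fintype.card K ^ Fintype.card ι ≤
      Fintype.card K ^ Fintype.card σ * (d * Fintype.card ι + 1) ^ Fintype.card ι := by
  classical
  let r (x : σ → K) (u : ι → K) : Prop := x + ∑ j, u j • e j ∈ Y
  have habove (x : σ → K) :
      #(univ.bipartiteAbove r x) ≤ (d * Fintype.card ι + 1) ^ Fintype.card ι :=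
    card_le_of_isNonsingularZero
      (fun i ↦ (totalDegree_affineRestriction_le x e (f i)).trans (hd i))
      fun u hu ↦ (hY _ (mem_filter.1 hu).2).affineRestriction
  have hbelow (u : ι → K) : #(univ.bipartiteBelow r u) = #Y :=
    card_nbij' (· + ∑ j, u j • e j) (· - ∑ j, u j • e j) (fun x hx ↦ (mem_filter.1 hx).2)
      (fun y hy ↦ by simpa [r, bipartiteBelow] using hy) (fun x _ ↦ add_sub_cancel_right _ _)
      (fun y _ ↦ sub_add_cancel _ _)
  have hcount := sum_card_bipartiteAbove_eq_sum_card_bipartiteBelow (s := univ) (t := univ) r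
  simp only [hbelow, sum_const, card_univ, Fintype.card_fun, smul_eq_mul] at hcount
  calc #Y * Fintype.card K ^ Fintype.card ι = ∑ x : σ → K, #(univ.bipartiteAbove r x) := by
        rw [hcount, mul_comm]
    _ ≤ ∑ _ : σ → K, (d * Fintype.card ι + 1) ^ Fintype.card ι := sum_le_sum fun x _ ↦ habove x
    _ = _ := by simp

end Bezout

section ElementaryCounting

theorem exists_card_le_two_mul_card_ne_zero {α A B F : Type*} [AddGroup A] [Finite A] [AddGroup B]
    [DecidableEq B] [FunLike F A B] [AddMonoidHomClass F A B] (φ : α → F) (Y : Finset α)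
    (hφ : ∀ x ∈ Y, ∃ a, φ x a ≠ 0) : ∃ a, #Y ≤ 2 * #{x ∈ Y | φ x a ≠ 0} := by
  classical
  have := Fintype.ofFinite A
  have hhalf (x : α) (hx : x ∈ Y) : Fintype.card A ≤ 2 * #{a | φ x a ≠ 0} := by
    obtain ⟨a₀, ha₀⟩ := hφ x hx
    have htranslate : #{a | φ x a = 0} ≤ #{a | φ x a ≠ 0} :=
      card_le_card_of_injOn (· + a₀) (fun a ha ↦ by simp_all) fun a _ b _ ↦ add_right_cancel
    have hsplit := card_filter_add_card_filter_not (s := univ) fun a ↦ φ x a = 0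
    rw [card_univ] at hsplit
    lia
  obtain ⟨a, -, ha⟩ : ∃ a ∈ univ, #Y ≤ 2 * #{x ∈ Y | φ x a ≠ 0} := by
    refine exists_le_of_sum_le univ_nonempty ?_
    calc ∑ _ : A, #Y = ∑ _ ∈ Y, Fintype.card A := by simp [mul_comm]
      _ ≤ ∑ x ∈ Y, 2 * #{a | φ x a ≠ 0} := sum_le_sum hhalf
      _ = ∑ a, 2 * #{x ∈ Y | φ x a ≠ 0} := by
        rw [← mul_sum, ← mul_sum]
        exact congrArg _ (sum_card_bipartiteAbove_eq_sum_card_bipartiteBelow _)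
  exact ⟨a, ha⟩

/- Multiplying on the right by `fromBlocks 1 (-(adjugate M * b)) 0 (det M)` makes the matrix block
lower triangular. -/
theorem det_fromBlocks_fin_one {ι R : Type*} [Fintype ι] [DecidableEq ι] [CommRing R] [IsDomain R]
    {M : Matrix ι ι R} (hM : M.det ≠ 0) (b : Matrix ι (Fin 1) R) (c : Matrix (Fin 1) ι R)
    (d : Matrix (Fin 1) (Fin 1) R) :
    (Matrix.fromBlocks M b c d).det = M.det * d 0 0 - (c * (M.adjugate * b)) 0 0 := by
  have hmul : Matrix.fromBlocks M b c d * Matrix.fromBlocks 1 (-(M.adjugate * b)) 0 (M.det • 1) =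
      Matrix.fromBlocks M 0 c (M.det • d - c * (M.adjugate * b)) := by
    rw [Matrix.fromBlocks_multiply]
    simp [← Matrix.mul_assoc, Matrix.mul_adjugate, sub_eq_neg_add]
  have hdet := congrArg Matrix.det hmul
  rw [Matrix.det_mul, Matrix.det_fromBlocks_zero₂₁, Matrix.det_fromBlocks_zero₁₂] at hdet
  refine mul_right_cancel₀ hM ?_
  simpa [mul_comm] using hdet

end ElementaryCounting

section borderedDeriv

variable {σ ι K : Type*} [Field K] [Fintype ι] [DecidableEq ι]

theorem det_jacobian_comp_equiv {κ : Type*} [Fintype κ] [DecidableEq κ] (e : ι → σ → K)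
    (f : ι → MvPolynomial σ K) (s : κ ≃ ι) :
    (jacobian (e ∘ s) (f ∘ s)).det = (jacobian e f).det :=
  Matrix.det_submatrix_equiv_self s (jacobian e f)

/-- The coefficients, linear in `w`, of the combination of the derivations `dirDeriv (e j)` that
agrees with `det (jacobian e f) • dirDeriv w` on the polynomials `f i`. -/
noncomputable def borderCoeff (e : ι → σ → K) (f : ι → MvPolynomial σ K) (j : ι) :
    (σ → K) →ₗ[K] MvPolynomial σ K where
  toFun w := ∑ i, (jacobian e f).adjugate j i * dirDeriv w (f i)
  map_add' v w := by simp [mul_add, sum_add_distrib]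
  map_smul' a w := by simp [smul_sum]

/-- The bordered minor of the polynomials `f i, g` in the directions `e j, w`, as a derivation
of `g`. -/
noncomputable def borderedDeriv (e : ι → σ → K) (f : ι → MvPolynomial σ K) :
    (σ → K) →ₗ[K] Derivation K (MvPolynomial σ K) (MvPolynomial σ K) where
  toFun w := (jacobian e f).det • dirDeriv w - ∑ j, borderCoeff e f j w • dirDeriv (e j)
  map_add' v w := by
    simp only [map_add, smul_add, add_smul, sum_add_distrib]
    abel
  map_smul' a w := by
    simp only [map_smul, smul_sub, smul_sum, RingHom.id_apply, smul_assoc]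
    rw [smul_comm]

theorem borderedDeriv_apply (e : ι → σ → K) (f : ι → MvPolynomial σ K) (w : σ → K)
    (g : MvPolynomial σ K) :
    borderedDeriv e f w g =
      (jacobian e f).det * dirDeriv w g - ∑ j, borderCoeff e f j w * dirDeriv (e j) g := by
  have hsum : (∑ j, borderCoeff e f j w • dirDeriv (e j)) g =
      ∑ j, borderCoeff e f j w * dirDeriv (e j) g := by
    rw [← Derivation.coeFnAddMonoidHom_apply, map_sum, Finset.sum_apply]
    rfl
  rw [← hsum]
  rfl

theorem det_jacobian_sumElim {e : ι → σ → K} {f : ι → MvPolynomial σ K}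
    (h : (jacobian e f).det ≠ 0) (w : σ → K) (g : MvPolynomial σ K) :
    (jacobian (Sum.elim e fun _ : Fin 1 ↦ w) (Sum.elim f fun _ ↦ g)).det =
      borderedDeriv e f w g := by
  have hblocks : jacobian (Sum.elim e fun _ : Fin 1 ↦ w) (Sum.elim f fun _ ↦ g) =
      Matrix.fromBlocks (jacobian e f) (.of fun i _ ↦ dirDeriv w (f i))
        (.of fun _ j ↦ dirDeriv (e j) g) (.of fun _ _ ↦ dirDeriv w g) := by
    ext (i | i) (j | j) : 2 <;> rfl
  rw [hblocks, det_fromBlocks_fin_one h, borderedDeriv_apply]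
  simp [Matrix.mul_apply, borderCoeff, mul_comm]

theorem totalDegree_borderedDeriv_le {e : ι → σ → K} {f : ι → MvPolynomial σ K} {d : ℕ}
    (hf : ∀ i, (f i).totalDegree ≤ d) {g : MvPolynomial σ K} (hg : g.totalDegree ≤ d)
    (w : σ → K) : (borderedDeriv e f w g).totalDegree ≤ (Fintype.card ι + 2) * d := by
  have hderiv (w : σ → K) {p : MvPolynomial σ K} (hp : p.totalDegree ≤ d) :
      (dirDeriv w p).totalDegree ≤ d := (totalDegree_dirDeriv_le w p).trans hp
  have hmul {p q : MvPolynomial σ K} {m n : ℕ} (hp : p.totalDegree ≤ m) (hq : q.totalDegree ≤ n) :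
      (p * q).totalDegree ≤ m + n := (totalDegree_mul _ _).trans (add_le_add hp hq)
  have hjac (i j : ι) : (jacobian e f i j).totalDegree ≤ d := hderiv _ (hf i)
  have hcoeff (j : ι) : (borderCoeff e f j w).totalDegree ≤ Fintype.card ι * d + d :=
    totalDegree_finsetSum_le fun i _ ↦ hmul (totalDegree_adjugate_le hjac j i) (hderiv _ (hf i))
  rw [borderedDeriv_apply]
  refine (totalDegree_sub _ _).trans <| max_le ?_ <| totalDegree_finsetSum_le fun j _ ↦ ?_
  · refine (hmul (totalDegree_det_le hjac) (hderiv _ hg)).trans ?_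
    rw [add_mul]
    lia
  · refine (hmul (hcoeff j) (hderiv _ hg)).trans_eq ?_
    ring

theorem isPerturbedMultiple_borderedDeriv {n : ℕ} {e : Fin n → σ → K}
    {f : Fin n → MvPolynomial σ K} {x : σ → K} (hx : eval x (jacobian e f).det ≠ 0) :
    IsPerturbedMultiple (aeval x) n dirDeriv (borderedDeriv e f) := by
  refine ⟨(jacobian e f).det, by rwa [aeval_eq_eval], n, le_rfl, borderCoeff e f,
    fun j ↦ -dirDeriv (e j), fun w g ↦ ?_⟩
  simp [borderedDeriv_apply, sub_eq_add_neg]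

end borderedDeriv

section LargeMinor

variable {σ K : Type*} [Field K] [DecidableEq K]

/-- Some `n × n` minor of the derivatives of polynomials in `E` is nonzero on a proportion at
least `8⁻ⁿ` of the points of `X`. -/
def HasLargeMinor (X : Finset (σ → K)) (E : Submodule K (MvPolynomial σ K)) (n : ℕ) : Prop :=
  ∃ (e : Fin n → σ → K) (f : Fin n → MvPolynomial σ K), (∀ i, f i ∈ E) ∧
    #X ≤ 8 ^ n * #{x ∈ X | eval x (jacobian e f).det ≠ 0}

variable {X : Finset (σ → K)} {E : Submodule K (MvPolynomial σ K)}

theorem hasLargeMinor_zero : HasLargeMinor X E 0 :=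
  ⟨Fin.elim0, Fin.elim0, fun i ↦ i.elim0, by simp⟩

theorem exists_card_le_eval_ne_zero [Finite σ] [Finite K] [Finite E]
    (D : (σ → K) →ₗ[K] Derivation K (MvPolynomial σ K) (MvPolynomial σ K))
    {Y : Finset (σ → K)} (hY : ∀ x ∈ Y, ∃ g ∈ E, ∃ w, eval x (D w g) ≠ 0) :
    ∃ g ∈ E, ∃ w, #Y ≤ 4 * #{x ∈ Y | eval x (D w g) ≠ 0} := by
  classical
  let φ (x : σ → K) : E →ₗ[K] (σ → K) →ₗ[K] K :=
    LinearMap.mk₂ K (fun g w ↦ eval x (D w g)) (by simp) (by simp [smul_eval]) (by simp)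
      (by simp [smul_eval])
  obtain ⟨g, hg⟩ := exists_card_le_two_mul_card_ne_zero φ Y fun x hx ↦ by
    obtain ⟨g, hg, w, hw⟩ := hY x hx
    exact ⟨⟨g, hg⟩, fun h ↦ hw (LinearMap.congr_fun h w)⟩
  obtain ⟨w, hw⟩ := exists_card_le_two_mul_card_ne_zero (φ · g) {x ∈ Y | φ x g ≠ 0} fun x hx ↦
    not_forall.1 fun h ↦ (mem_filter.1 hx).2 (LinearMap.ext h)
  refine ⟨g, g.2, w, hg.trans ?_⟩
  have hsub : #{x ∈ {x ∈ Y | φ x g ≠ 0} | φ x g w ≠ 0} ≤ #{x ∈ Y | eval x (D w g) ≠ 0} :=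
    card_le_card (filter_subset_filter _ (filter_subset _ _))
  lia

theorem HasLargeMinor.exists_borderedDeriv_eq_zero [Finite σ] [Finite K] [Finite E] {n : ℕ}
    (h : HasLargeMinor X E n) (h' : ¬HasLargeMinor X E (n + 1)) :
    ∃ (e : Fin n → σ → K) (f : Fin n → MvPolynomial σ K) (X' : Finset (σ → K)),
      (∀ i, f i ∈ E) ∧ X' ⊆ X ∧ #X ≤ 8 ^ (n + 1) * #X' ∧
      ∀ x ∈ X', eval x (jacobian e f).det ≠ 0 ∧
        ∀ g ∈ E, ∀ w, eval x (borderedDeriv e f w g) = 0 := by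
  classical
  obtain ⟨e, f, hf, hX⟩ := h
  set Y : Finset (σ → K) := {x ∈ X | eval x (jacobian e f).det ≠ 0}
  let good (x : σ → K) : Prop := ∀ g ∈ E, ∀ w, eval x (borderedDeriv e f w g) = 0
  have hsplit := card_filter_add_card_filter_not (s := Y) good
  refine ⟨e, f, {x ∈ Y | good x}, hf, (filter_subset _ _).trans (filter_subset _ _), ?_,
    fun x hx ↦ ⟨(mem_filter.1 (mem_filter.1 hx).1).2, (mem_filter.1 hx).2⟩⟩
  by_contra! hlarge
  obtain ⟨g, hg, w, hw⟩ := exists_card_le_eval_ne_zero (E := E) (borderedDeriv e f)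
    (Y := {x ∈ Y | ¬good x}) fun x hx ↦ by simpa [good] using (mem_filter.1 hx).2
  have hlt : 8 * #{x ∈ Y | good x} < #Y := by
    refine lt_of_mul_lt_mul_left (a := 8 ^ n) ?_ (by positivity)
    calc 8 ^ n * (8 * #{x ∈ Y | good x}) = 8 ^ (n + 1) * #{x ∈ Y | good x} := by ring
      _ < 8 ^ n * #Y := hlarge.trans_le hX
  have hdet : (jacobian e f).det ≠ 0 := fun h0 ↦ by simp [Y, h0] at hlt
  refine h' ⟨Sum.elim e (fun _ ↦ w) ∘ finSumFinEquiv.symm,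
    Sum.elim f (fun _ ↦ g) ∘ finSumFinEquiv.symm, fun i ↦ ?_, ?_⟩
  · rw [Function.comp_apply]
    cases finSumFinEquiv.symm i with
    | inl i => exact hf i
    | inr _ => exact hg
  · rw [det_jacobian_comp_equiv, det_jacobian_sumElim hdet]
    have hsub : #{x ∈ {x ∈ Y | ¬good x} | eval x (borderedDeriv e f w g) ≠ 0} ≤
        #{x ∈ X | eval x (borderedDeriv e f w g) ≠ 0} :=
      card_le_card (filter_subset_filter _ ((filter_subset _ _).trans (filter_subset _ _)))
    calc #X ≤ 8 ^ n * #Y := hX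
      _ ≤ 8 ^ n * (8 * #{x ∈ X | eval x (borderedDeriv e f w g) ≠ 0}) := by gcongr; lia
      _ = _ := by ring

theorem not_hasLargeMinor [Fintype σ] [Fintype K] {d L n : ℕ}
    (hzero : ∀ g ∈ E, ∀ x ∈ X, eval x g = 0) (hdeg : ∀ g ∈ E, g.totalDegree ≤ d)
    (hX : Fintype.card K ^ Fintype.card σ ≤ #X * Fintype.card K ^ L)
    (hK : (8 * (d * n + 1)) ^ 2 ≤ Fintype.card K) (hn : 2 * L < n) : ¬HasLargeMinor X E n := by
  rintro ⟨e, f, hf, hlarge⟩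
  have hone : 1 < Fintype.card K := Fintype.one_lt_card
  have hbezout := card_mul_le_of_isNonsingularZero (e := e) (fun i ↦ hdeg _ (hf i))
    (Y := {x ∈ X | eval x (jacobian e f).det ≠ 0}) fun x hx ↦
      ⟨fun i ↦ hzero _ (hf i) x (mem_filter.1 hx).1, (mem_filter.1 hx).2⟩
  rw [Fintype.card_fin] at hbezout
  generalize #{x ∈ X | eval x (jacobian e f).det ≠ 0} = y at hlarge hbezout
  generalize Fintype.card K = q at *
  have hle : q ^ Fintype.card σ * q ^ n ≤
      q ^ Fintype.card σ * ((8 * (d * n + 1)) ^ n * q ^ L) :=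
    calc q ^ Fintype.card σ * q ^ n ≤ 8 ^ n * y * q ^ L * q ^ n := by
          gcongr
          exact hX.trans (Nat.mul_le_mul_right _ hlarge)
      _ = 8 ^ n * q ^ L * (y * q ^ n) := by ring
      _ ≤ 8 ^ n * q ^ L * (q ^ Fintype.card σ * (d * n + 1) ^ n) := by gcongr
      _ = _ := by rw [mul_pow]; ring
  have hle' := Nat.le_of_mul_le_mul_left hle (by positivity)
  have hsq : q ^ (2 * n) ≤ q ^ (n + 2 * L) :=
    calc q ^ (2 * n) = (q ^ n) ^ 2 := by rw [← pow_mul, mul_comm]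
      _ ≤ ((8 * (d * n + 1)) ^ n * q ^ L) ^ 2 := by gcongr
      _ = ((8 * (d * n + 1)) ^ 2) ^ n * q ^ (2 * L) := by
        rw [mul_pow, ← pow_mul, ← pow_mul, ← pow_mul, mul_comm n, mul_comm L]
      _ ≤ q ^ n * q ^ (2 * L) := by gcongr
      _ = _ := (pow_add _ _ _).symm
  have := (Nat.pow_le_pow_iff_right hone).1 hsq
  lia

end LargeMinor

section Elimination

variable {σ K : Type*} [Fintype σ] [Field K] [Fintype K] {X : Finset (σ → K)}
  {E : Submodule K (MvPolynomial σ K)} {d L : ℕ}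

theorem exists_borderedDeriv_eq_zero (hzero : ∀ g ∈ E, ∀ x ∈ X, eval x g = 0)
    (hdeg : E ≤ restrictTotalDegree σ K d)
    (hX : Fintype.card K ^ Fintype.card σ ≤ #X * Fintype.card K ^ L)
    (hK : (8 * (d * (2 * L + 1) + 1)) ^ 2 ≤ Fintype.card K) :
    ∃ n ≤ 2 * L, ∃ (e : Fin n → σ → K) (f : Fin n → MvPolynomial σ K) (X' : Finset (σ → K)),
      (∀ i, f i ∈ E) ∧ X' ⊆ X ∧
      Fintype.card K ^ Fintype.card σ ≤ #X' * Fintype.card K ^ (2 * L + 1) ∧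
      ∀ x ∈ X', eval x (jacobian e f).det ≠ 0 ∧
        ∀ g ∈ E, ∀ w, eval x (borderedDeriv e f w g) = 0 := by
  classical
  have : Finite E :=
    have := Submodule.finiteDimensional_of_le hdeg
    Module.finite_of_finite K
  obtain ⟨n, hn, hlarge, hsmall⟩ :
      ∃ n ≤ 2 * L, HasLargeMinor X E n ∧ ¬HasLargeMinor X E (n + 1) := by
    by_contra! hstep
    refine not_hasLargeMinor hzero (fun g hg ↦ (mem_restrictTotalDegree ..).1 (hdeg hg)) hX hK
      (Nat.lt_succ_self _) ?_
    exact Nat.le_induction (m := 0) (P := fun n _ ↦ n ≤ 2 * L + 1 → HasLargeMinor X E n)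
      (fun _ ↦ hasLargeMinor_zero) (fun n _ ih hn ↦ hstep n (by lia) (ih (by lia))) _
      (Nat.zero_le _) le_rfl
  obtain ⟨e, f, X', hf, hsub, hcard, hX'⟩ := hlarge.exists_borderedDeriv_eq_zero hsmall
  refine ⟨n, hn, e, f, X', hf, hsub, ?_, hX'⟩
  have h64 : 8 ^ 2 ≤ Fintype.card K := le_trans (Nat.pow_le_pow_left (by lia) 2) hK
  generalize Fintype.card K = q at *
  calc q ^ Fintype.card σ ≤ #X * q ^ L := hX
    _ ≤ 8 ^ (2 * (L + 1)) * #X' * q ^ L := by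
      gcongr
      exact hcard.trans (Nat.mul_le_mul_right _ (Nat.pow_le_pow_right (by norm_num) (by lia)))
    _ ≤ q ^ (L + 1) * #X' * q ^ L := by rw [pow_mul]; gcongr
    _ = #X' * q ^ (2 * L + 1) := by ring

end Elimination

section Iteration

variable {σ ι K : Type*} [Fintype σ] [Field K] [Fintype K]

theorem exists_isPerturbedMultiple {X : Finset (σ → K)} {E : Submodule K (MvPolynomial σ K)}
    {d L : ℕ} (hzero : ∀ g ∈ E, ∀ x ∈ X, eval x g = 0) (hdeg : E ≤ restrictTotalDegree σ K d)
    (hX : Fintype.card K ^ Fintype.card σ ≤ #X * Fintype.card K ^ L)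
    (hK : (8 * (d * (2 * L + 1) + 1)) ^ 2 ≤ Fintype.card K) :
    ∃ (D : (σ → K) →ₗ[K] Derivation K (MvPolynomial σ K) (MvPolynomial σ K))
      (E' : Submodule K (MvPolynomial σ K)) (X' : Finset (σ → K)), X' ⊆ X ∧
      (∀ x ∈ X', IsPerturbedMultiple (aeval x) (2 * L) dirDeriv D) ∧
      (∀ g ∈ E, ∀ w, D w g ∈ E') ∧ (∀ g ∈ E', ∀ x ∈ X', eval x g = 0) ∧
      E' ≤ restrictTotalDegree σ K ((2 * L + 2) * d) ∧
      Fintype.card K ^ Fintype.card σ ≤ #X' * Fintype.card K ^ (2 * L + 1) := by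
  classical
  obtain ⟨n, hn, e, f, X', hf, hsub, hcard, hX'⟩ := exists_borderedDeriv_eq_zero hzero hdeg hX hK
  let B : (σ → K) →ₗ[K] MvPolynomial σ K →ₗ[K] MvPolynomial σ K :=
    LinearMap.mk₂ K (fun w g ↦ borderedDeriv e f w g) (by simp) (by simp) (by simp) (by simp)
  refine ⟨borderedDeriv e f, Submodule.map₂ B ⊤ E, X', hsub,
    fun x hx ↦ (isPerturbedMultiple_borderedDeriv (hX' x hx).1).mono hn,
    fun g hg w ↦ Submodule.apply_mem_map₂ B Submodule.mem_top hg, fun g hg x hx ↦ ?_, ?_, hcard⟩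
  · have hle : Submodule.map₂ B ⊤ E ≤ LinearMap.ker (aeval (R := K) x).toLinearMap :=
      Submodule.map₂_le.2 fun w _ g hg ↦ (hX' x hx).2 g hg w
    exact hle hg
  · refine Submodule.map₂_le.2 fun w _ g hg ↦ ?_
    simp only [SetLike.le_def, mem_restrictTotalDegree] at hdeg ⊢
    refine (totalDegree_borderedDeriv_le (fun i ↦ hdeg (hf i)) (hdeg hg) w).trans ?_
    rw [Fintype.card_fin]
    gcongr

theorem exists_forall_iterDeriv_eq_zero (l : List ι) {X : Finset (σ → K)}
    {E : Submodule K (MvPolynomial σ K)} {d L N : ℕ} (hzero : ∀ g ∈ E, ∀ x ∈ X, eval x g = 0)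
    (hdeg : E ≤ restrictTotalDegree σ K d)
    (hX : Fintype.card K ^ Fintype.card σ ≤ #X * Fintype.card K ^ L)
    (hN : 2 ^ l.length * (2 * (L + 1)) = N)
    (hK : (8 * (d * N ^ (l.length + 1) + 1)) ^ 2 ≤ Fintype.card K) :
    ∃ x ∈ X, ∃ ls : List
        (ι × ((σ → K) →ₗ[K] Derivation K (MvPolynomial σ K) (MvPolynomial σ K))),
      ls.map Prod.fst = l ∧ (∀ p ∈ ls, IsPerturbedMultiple (aeval x) N dirDeriv p.2) ∧
      ∀ g ∈ E, ∀ v : ι → σ → K, eval x (iterDeriv v ls g) = 0 := by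
  classical
  induction l generalizing X E d L with
  | nil =>
    obtain ⟨x, hx⟩ : X.Nonempty := by
      rw [nonempty_iff_ne_empty]
      rintro rfl
      simp at hX
    exact ⟨x, hx, [], rfl, by simp, fun g hg _ ↦ hzero g hg x hx⟩
  | cons i l ih =>
    rw [List.length_cons] at hN hK
    have hLN : 2 * L + 2 ≤ N :=
      le_trans (by linarith) ((Nat.le_mul_of_pos_left (2 * (L + 1)) (by positivity)).trans_eq hN)
    obtain ⟨D, E', X', hsub, hD, hDE, hzero', hdeg', hX'⟩ :=
      exists_isPerturbedMultiple hzero hdeg hX <| by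
        refine le_trans ?_ hK
        gcongr
        exact le_trans (by lia) (Nat.le_self_pow (Nat.succ_ne_zero _) N)
    have hdegN : (2 * L + 2) * d * N ^ (l.length + 1) ≤ d * N ^ (l.length + 1 + 1) :=
      calc (2 * L + 2) * d * N ^ (l.length + 1) ≤ N * d * N ^ (l.length + 1) := by gcongr
        _ = d * N ^ (l.length + 1 + 1) := by ring
    obtain ⟨x, hx, ls, hls, hpert, hiter⟩ := ih hzero' hdeg' hX' (by rw [← hN]; ring)
      (le_trans (by gcongr) hK)
    exact ⟨x, hsub hx, (i, D) :: ls, by rw [List.map_cons, hls],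
      List.forall_mem_cons.2 ⟨(hD x hx).mono (by lia), hpert⟩, fun g hg v ↦ hiter _ (hDE g hg _) v⟩

end Iteration

section coordForm

variable {ι R A A' : Type*} [CommSemiring R] [CommSemiring A] [Algebra R A] [CommSemiring A']
  [Algebra R A'] [Fintype ι] [DecidableEq ι] {B : ι → Type*} [∀ i, Fintype (B i)]

variable (A) in
/-- The multilinear form with coefficients `a` in the coordinates `v i j`, evaluated on vectors
with entries in an `R`-algebra `A`. -/
def coordForm (a : (∀ i, B i) → R) : MultilinearMap A (fun i ↦ B i → A) A :=
  ∑ j, algebraMap R A (a j) •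
    (MultilinearMap.mkPiAlgebra A ι A).compLinearMap fun i ↦ LinearMap.proj (j i)

theorem coordForm_apply (a : (∀ i, B i) → R) (v : ∀ i, B i → A) :
    coordForm A a v = ∑ j, algebraMap R A (a j) * ∏ i, v i (j i) := by
  simp [coordForm]

theorem map_coordForm (φ : A →ₐ[R] A') (a : (∀ i, B i) → R) (v : ∀ i, B i → A) :
    φ (coordForm A a v) = coordForm A' a fun i b ↦ φ (v i b) := by
  simp [coordForm_apply]

theorem coordForm_algebraMap_comp [Algebra A A'] [IsScalarTower R A A'] (a : (∀ i, B i) → R) :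
    coordForm A' (algebraMap R A ∘ a) = coordForm A' a := by
  simp [coordForm, ← IsScalarTower.algebraMap_apply]

theorem totalDegree_coordForm_le {σ : Type*} (a : (∀ i, B i) → R)
    {v : ∀ i, B i → MvPolynomial σ R} (hv : ∀ i b, (v i b).totalDegree ≤ 1) :
    (coordForm (MvPolynomial σ R) a v).totalDegree ≤ Fintype.card ι := by
  rw [coordForm_apply]
  refine totalDegree_finsetSum_le fun j _ ↦ (totalDegree_mul _ _).trans ?_
  rw [algebraMap_eq, totalDegree_C, zero_add]
  refine (totalDegree_finsetProd _ _).trans ?_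
  simpa using sum_le_sum fun i (_ : i ∈ univ) ↦ hv i (j i)

end coordForm

theorem derivation_prod_eq_zero {ι R A M : Type*} [CommSemiring R] [CommSemiring A] [Algebra R A]
    [AddCommMonoid M] [Module A M] [Module R M] (D : Derivation R A M) {s : Finset ι} {f : ι → A}
    (h : ∀ i ∈ s, D (f i) = 0) : D (∏ i ∈ s, f i) = 0 := by
  classical
  induction s using Finset.induction_on with
  | empty => simp
  | insert i s hi ih =>
    rw [prod_insert hi, D.leibniz, h i (mem_insert_self i s),
      ih fun j hj ↦ h j (mem_insert_of_mem hj), smul_zero, smul_zero, add_zero]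

theorem derivation_coordForm {ι R A : Type*} [CommSemiring R] [CommSemiring A] [Algebra R A]
    [Fintype ι] [DecidableEq ι] {B : ι → Type*} [∀ i, Fintype (B i)] (D : Derivation R A A)
    (a : (∀ i, B i) → R) {v : ∀ i, B i → A} {i : ι} (h : ∀ j ≠ i, ∀ b, D (v j b) = 0) :
    D (coordForm A a v) = coordForm A a (Function.update v i fun b ↦ D (v i b)) := by
  simp only [coordForm_apply, map_sum, D.leibniz, D.map_algebraMap, smul_zero, add_zero]
  refine sum_congr rfl fun j _ ↦ ?_
  rw [← mul_prod_erase univ _ (mem_univ i), D.leibniz,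
    derivation_prod_eq_zero D fun k hk ↦ h k (ne_of_mem_erase hk) _, smul_zero, zero_add,
    ← mul_prod_erase univ _ (mem_univ i), Function.update_self, smul_eq_mul, smul_eq_mul,
    mul_comm (D _)]
  congr 2
  exact prod_congr rfl fun k hk ↦ by rw [Function.update_of_ne (ne_of_mem_erase hk)]

section rankLE_coordForm

variable {ι K : Type*} [Field K] [DecidableEq ι] {B : ι → Type*}

variable (K B) in
/-- The inclusion of the `i`-th space of vectors in the product of all of them, the latter being
indexed by `Sigma B`. -/
def blockInclusion (i : ι) : (B i → K) →ₗ[K] Sigma B → K :=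
  (LinearEquiv.piCurry K fun (i : ι) (_ : B i) ↦ K).symm.toLinearMap ∘ₗ
    LinearMap.single K (fun i ↦ B i → K) i

theorem blockInclusion_apply (i : ι) (w : B i → K) (p : Sigma B) :
    blockInclusion K B i w p = (Pi.single i w : ∀ i, B i → K) p.1 p.2 :=
  rfl

/-- The vectors `v i` for `i ∈ T`, completed by vectors whose entries are independent variables. -/
noncomputable def genericExtension (T : Finset ι) (v : ∀ i, B i → K) :
    ∀ i, B i → MvPolynomial (Sigma B) K :=
  T.piecewise (fun i b ↦ C (v i b)) fun i b ↦ X ⟨i, b⟩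

theorem dirDeriv_genericExtension {T : Finset ι} {i j : ι} (hi : i ∉ T) (v : ∀ i, B i → K)
    (b : B j) : dirDeriv (blockInclusion K B i (v i)) (genericExtension T v j b) =
      if j = i then C (v j b) else 0 := by
  by_cases hj : j ∈ T
  · have : j ≠ i := fun h ↦ hi (h ▸ hj)
    simp [genericExtension, hj, this]
  · obtain rfl | hij := eq_or_ne j i <;> simp [genericExtension, blockInclusion_apply, *]

theorem totalDegree_genericExtension_le (T : Finset ι) (v : ∀ i, B i → K) (i : ι) (b : B i) :
    (genericExtension T v i b).totalDegree ≤ 1 := by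
  by_cases hi : i ∈ T <;> simp [genericExtension, hi]

variable [Fintype ι] [∀ i, Fintype (B i)]

theorem iterDeriv_coordForm (a : (∀ i, B i) → K) (v : ∀ i, B i → K) {l : List ι} {T : Finset ι}
    (hl : Enumerates l T) :
    iterDeriv (fun i ↦ blockInclusion K B i (v i)) (l.map fun i ↦ (i, dirDeriv))
      (coordForm (MvPolynomial (Sigma B) K) a (genericExtension T v)) =
        C (coordForm K a v) := by
  induction l generalizing T with
  | nil =>
    obtain rfl : T = univ := hl
    rw [genericExtension, piecewise_univ]
    exact (map_coordForm (Algebra.ofId K (MvPolynomial (Sigma B) K)) a v).symm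
  | cons i l ih =>
    obtain ⟨hi, hl⟩ := hl
    rw [List.map_cons, iterDeriv_cons, ← ih hl, derivation_coordForm (i := i)]
    · simp only [dirDeriv_genericExtension hi, if_true]
      rw [genericExtension, genericExtension, piecewise_insert]
    · intro j hj b
      rw [dirDeriv_genericExtension hi, if_neg hj]

/-- The form with coefficients `a`, as a linear function of its variable of index `i₀` with values
in the polynomials in the other variables. -/
noncomputable def genericForm (a : (∀ i, B i) → K) (i₀ : ι) :
    (B i₀ → K) →ₗ[K] MvPolynomial (Sigma B) K :=
  ((coordForm (MvPolynomial (Sigma B) K) a).toLinearMap (fun i b ↦ X ⟨i, b⟩) i₀).restrictScalars K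
    ∘ₗ (Algebra.linearMap K (MvPolynomial (Sigma B) K)).compLeft (B i₀)

theorem genericForm_apply (a : (∀ i, B i) → K) (i₀ : ι) (v : ∀ i, B i → K) :
    genericForm a i₀ (v i₀) = coordForm (MvPolynomial (Sigma B) K) a (genericExtension {i₀} v) := by
  rw [genericExtension, piecewise_singleton]
  rfl

theorem totalDegree_genericForm_le (a : (∀ i, B i) → K) (i₀ : ι) (z : B i₀ → K) :
    (genericForm a i₀ z).totalDegree ≤ Fintype.card ι := by
  rw [← Function.update_self i₀ z (0 : ∀ i, B i → K), genericForm_apply]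
  exact totalDegree_coordForm_le a (totalDegree_genericExtension_le _ _)

theorem eval_genericForm (a : (∀ i, B i) → K) (i₀ : ι) (x : ∀ i, B i → K) (z : B i₀ → K) :
    eval (Sigma.uncurry x) (genericForm a i₀ z) = coordForm K a (Function.update x i₀ z) := by
  rw [← Function.update_self i₀ z x, genericForm_apply, ← aeval_eq_eval, Function.update_self]
  refine (map_coordForm (aeval (R := K) (Sigma.uncurry x)) a _).trans (congrArg _ ?_)
  funext i b
  obtain rfl | hi := eq_or_ne i i₀ <;> simp [genericExtension, Sigma.uncurry, *]

theorem exists_rankLE_iterDeriv_genericForm_sub (a : (∀ i, B i) → K) {i₀ : ι} {N : ℕ}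
    {x : Sigma B → K} {l : List (ι × ((Sigma B → K) →ₗ[K]
      Derivation K (MvPolynomial (Sigma B) K) (MvPolynomial (Sigma B) K)))}
    (hl : Enumerates (l.map Prod.fst) {i₀})
    (hN : ∀ p ∈ l, IsPerturbedMultiple (aeval x) N dirDeriv p.2) :
    ∃ c ≠ 0, RankLE K i₀ (l.length * (2 ^ l.length * (N + 1))) fun v : ∀ i, B i → K ↦
      eval x (iterDeriv (fun i ↦ blockInclusion K B i (v i)) l (genericForm a i₀ (v i₀))) -
        c * coordForm K a v := by
  let P := genericForm a i₀ ∘ₗ LinearMap.funLeft K K (Sigma.mk i₀)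
  have hP : IsMultilinearOn K {i₀} fun v : ι → Sigma B → K ↦ P (v i₀) :=
    (IsMultilinearOn.eval K (fun _ ↦ Sigma B → K) i₀).linearMap_comp P
  obtain ⟨c, hc, h⟩ := exists_rankLE_iterDeriv_sub (aeval x) l hN hP (mem_singleton_self i₀) hl
  have hPv (v : ∀ i, B i → K) : P (blockInclusion K B i₀ (v i₀)) = genericForm a i₀ (v i₀) := by
    refine congrArg (genericForm a i₀) (funext fun b ↦ ?_)
    simp [LinearMap.funLeft_apply, blockInclusion_apply]
  have hiter (v : ∀ i, B i → K) : eval x (iterDeriv (fun i ↦ blockInclusion K B i (v i))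
      (l.map fun p ↦ (p.1, dirDeriv)) (genericForm a i₀ (v i₀))) = coordForm K a v := by
    rw [genericForm_apply, ← eval_C (f := x) (coordForm K a v), ← iterDeriv_coordForm a v hl,
      List.map_map, Function.comp_def]
  refine ⟨c, hc, ?_⟩
  simpa only [hPv, hiter, aeval_eq_eval] using h.comp_linearMap (blockInclusion K B)

theorem rankLE_coordForm [Fintype K] (a : (∀ i, B i) → K) {i₀ : ι} {X : Finset (∀ i, B i → K)}
    {s L N : ℕ} (hs : Fintype.card ι = s + 1)
    (hzero : ∀ x ∈ X, ∀ z, coordForm K a (Function.update x i₀ z) = 0)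
    (hX : Fintype.card K ^ Fintype.card (Sigma B) ≤ #X * Fintype.card K ^ L)
    (hN : 2 ^ s * (2 * (L + 1)) = N)
    (hK : (8 * ((s + 1) * N ^ (s + 1) + 1)) ^ 2 ≤ Fintype.card K) :
    RankLE K i₀ (s * (2 ^ s * (N + 1))) (coordForm K a) := by
  obtain ⟨l, hl, rfl⟩ : ∃ l, Enumerates l {i₀} ∧ l.length = s := by
    simpa [card_compl, hs] using exists_enumerates {i₀}
  let X' := X.map (Equiv.piCurry fun (i : ι) (_ : B i) ↦ K).symm.toEmbedding
  have hzero' : ∀ g ∈ LinearMap.range (genericForm a i₀), ∀ x ∈ X', eval x g = 0 := by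
    rintro _ ⟨z, rfl⟩ y hy
    obtain ⟨x, hx, rfl⟩ := mem_map.1 hy
    exact (eval_genericForm a i₀ x z).trans (hzero x hx z)
  have hdeg : LinearMap.range (genericForm a i₀) ≤
      restrictTotalDegree (Sigma B) K (l.length + 1) := by
    rintro _ ⟨z, rfl⟩
    rw [mem_restrictTotalDegree, ← hs]
    exact totalDegree_genericForm_le a i₀ z
  obtain ⟨x, -, ls, rfl, hpert, hiter⟩ :=
    exists_forall_iterDeriv_eq_zero l hzero' hdeg (by rwa [card_map]) hN hK
  obtain ⟨c, hc, h⟩ := exists_rankLE_iterDeriv_genericForm_sub a hl hpert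
  convert h.const_mul (-c⁻¹) using 1
  · simp
  · funext v
    rw [hiter _ ⟨v i₀, rfl⟩, zero_sub, neg_mul_neg, inv_mul_cancel_left₀ hc]

end rankLE_coordForm

section density

open scoped BigOperators

theorem pow_expect_le {ι : Type*} [Fintype ι] [Nonempty ι] {f : ι → ℝ} (hf : ∀ i, 0 ≤ f i)
    (m : ℕ) : (𝔼 i, f i) ^ m ≤ 𝔼 i, f i ^ m := by
  have h := Real.pow_arith_mean_le_arith_mean_pow univ (fun _ ↦ (Fintype.card ι : ℝ)⁻¹) f
    (fun i _ ↦ by positivity) (by simp) (fun i _ ↦ hf i) m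
  rwa [← mul_sum, ← mul_sum, inv_mul_eq_div, inv_mul_eq_div, ← Fintype.expect_eq_sum_div_card,
    ← Fintype.expect_eq_sum_div_card] at h

theorem expect_eq_expect_fin_cons {n : ℕ} {X : Fin (n + 1) → Type*} [∀ i, Fintype (X i)]
    (f : (∀ i, X i) → ℝ) :
    𝔼 x, f x = 𝔼 a : X 0, 𝔼 y : ∀ i : Fin n, X i.succ, f (Fin.cons a y) := by
  rw [← expect_product', univ_product_univ]
  exact Fintype.expect_equiv (Fin.consEquiv X).symm _ _ fun x ↦ by simp [Fin.consEquiv]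

theorem prod_fin_cons {n m : ℕ} {X : Fin (n + 1) → Type*} (f : (∀ i, X i) → ℝ)
    (a : Fin m → X 0) (y : ∀ i : Fin n, Fin m → X i.succ) :
    ∏ J : Fin (n + 1) → Fin m, f (fun i ↦ Fin.cons (α := fun i ↦ Fin m → X i) a y i (J i)) =
      ∏ J : Fin n → Fin m, ∏ j, f (Fin.cons (a j) fun i ↦ y i (J i)) := by
  rw [← (Fin.consEquiv fun _ ↦ Fin m).prod_comp, Fintype.prod_prod_type, prod_comm]
  refine prod_congr rfl fun J _ ↦ prod_congr rfl fun j _ ↦ congrArg f (funext fun i ↦ ?_)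
  cases i using Fin.cases <;> simp [Fin.consEquiv]

theorem pow_expect_le_expect_prod {n : ℕ} (m : ℕ) {X : Fin n → Type*} [∀ i, Fintype (X i)]
    [∀ i, Nonempty (X i)] {f : (∀ i, X i) → ℝ} (hf : ∀ x, 0 ≤ f x) :
    (𝔼 x, f x) ^ m ^ n ≤
      𝔼 x : ∀ i, Fin m → X i, ∏ J : Fin n → Fin m, f fun i ↦ x i (J i) := by
  induction n with
  | zero => simp [Subsingleton.elim _ (default : ∀ i, X i)]
  | succ n ih =>
    calc (𝔼 x, f x) ^ m ^ (n + 1)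
        = ((𝔼 y : ∀ i : Fin n, X i.succ, 𝔼 a, f (Fin.cons a y)) ^ m) ^ m ^ n := by
          rw [expect_eq_expect_fin_cons, expect_comm, ← pow_mul, pow_succ']
      _ ≤ (𝔼 y : ∀ i : Fin n, X i.succ, (𝔼 a, f (Fin.cons a y)) ^ m) ^ m ^ n := by
          have h (y : ∀ i : Fin n, X i.succ) : 0 ≤ 𝔼 a, f (Fin.cons a y) :=
            expect_nonneg fun a _ ↦ hf _
          gcongr
          · exact pow_nonneg (expect_nonneg fun y _ ↦ h y) m
          · exact pow_expect_le h m
      _ = (𝔼 a : Fin m → X 0, 𝔼 y : ∀ i : Fin n, X i.succ, ∏ j, f (Fin.cons (a j) y)) ^ m ^ n := by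
          rw [expect_comm]
          simp only [← Fintype.piFinset_univ, expect_pow]
      _ ≤ 𝔼 a : Fin m → X 0, (𝔼 y : ∀ i : Fin n, X i.succ, ∏ j, f (Fin.cons (a j) y)) ^ m ^ n :=
          pow_expect_le (fun a ↦ expect_nonneg fun y _ ↦ prod_nonneg fun j _ ↦ hf _) _
      _ ≤ 𝔼 a : Fin m → X 0, 𝔼 y : ∀ i : Fin n, Fin m → X i.succ,
            ∏ J : Fin n → Fin m, ∏ j, f (Fin.cons (a j) fun i ↦ y i (J i)) :=
          expect_le_expect fun a _ ↦ ih fun y ↦ prod_nonneg fun j _ ↦ hf _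
      _ = 𝔼 x : ∀ i, Fin m → X i, ∏ J : Fin (n + 1) → Fin m, f fun i ↦ x i (J i) := by
          rw [expect_eq_expect_fin_cons]
          simp only [prod_fin_cons]

theorem card_pi_le_card_mul_pow {n : ℕ} {X : Fin n → Type*} [∀ i, Fintype (X i)]
    [∀ i, Nonempty (X i)] {S : Finset (∀ i, X i)} {t : ℕ}
    (hS : Fintype.card (∀ i, X i) ≤ #S * t) (m : ℕ) {Y : Finset (∀ i, Fin m → X i)}
    (hY : ∀ x, (∀ J : Fin n → Fin m, (fun i ↦ x i (J i)) ∈ S) → x ∈ Y) :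
    Fintype.card (∀ i, Fin m → X i) ≤ #Y * t ^ m ^ n := by
  classical
  have hle : ((#S : ℝ) / Fintype.card (∀ i, X i)) ^ m ^ n ≤
      #Y / Fintype.card (∀ i, Fin m → X i) := by
    calc ((#S : ℝ) / Fintype.card (∀ i, X i)) ^ m ^ n
        = (𝔼 x, if x ∈ S then (1 : ℝ) else 0) ^ m ^ n := by
          simp [Fintype.expect_eq_sum_div_card]
      _ ≤ 𝔼 x : ∀ i, Fin m → X i, ∏ J : Fin n → Fin m,
            if (fun i ↦ x i (J i)) ∈ S then (1 : ℝ) else 0 :=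
          pow_expect_le_expect_prod m fun x ↦ by split_ifs <;> norm_num
      _ ≤ 𝔼 x : ∀ i, Fin m → X i, if x ∈ Y then (1 : ℝ) else 0 := by
          refine expect_le_expect fun x _ ↦ ?_
          rw [prod_ite_zero, prod_const_one]
          split_ifs with h₁ h₂
          · exact le_rfl
          · exact absurd (hY x fun J ↦ h₁ J (mem_univ J)) h₂
          · exact zero_le_one
          · exact le_rfl
      _ = #Y / Fintype.card (∀ i, Fin m → X i) := by simp [Fintype.expect_eq_sum_div_card]
  have hX : (0 : ℝ) < Fintype.card (∀ i, X i) := mod_cast Fintype.card_pos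
  have hY' : (0 : ℝ) < Fintype.card (∀ i, Fin m → X i) := mod_cast Fintype.card_pos
  have ht : (1 : ℝ) ≤ #S / Fintype.card (∀ i, X i) * t := by
    rw [div_mul_eq_mul_div, one_le_div hX]
    exact_mod_cast hS
  have h1 : (1 : ℝ) ≤ #Y / Fintype.card (∀ i, Fin m → X i) * t ^ m ^ n :=
    calc (1 : ℝ) ≤ (#S / Fintype.card (∀ i, X i) * t) ^ m ^ n := one_le_pow₀ ht
      _ = (#S / Fintype.card (∀ i, X i)) ^ m ^ n * t ^ m ^ n := mul_pow ..
      _ ≤ #Y / Fintype.card (∀ i, Fin m → X i) * t ^ m ^ n := by gcongr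
  rw [div_mul_eq_mul_div, one_le_div hY'] at h1
  exact_mod_cast h1

end density

section combine

variable {ι F K κ : Type*} [Field F] [Field K] [Algebra F K] [Fintype κ] {B : ι → Type*}

/-- The vectors over `K` whose coordinates in the basis `ω` are the vectors `x i k` over `F`. -/
noncomputable def combine (ω : Module.Basis κ F K) (x : ∀ i, κ → B i → F) : ∀ i, B i → K :=
  fun i b ↦ ∑ k, x i k b • ω k

theorem combine_injective (ω : Module.Basis κ F K) :
    Function.Injective (combine (B := B) ω) := by
  intro x y h
  funext i k b
  have := congrArg (fun z ↦ ω.repr (z i b) k) h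
  simpa only [combine, Module.Basis.repr_sum_self] using this

theorem update_combine [DecidableEq ι] (ω : Module.Basis κ F K) (x : ∀ i, κ → B i → F) (i : ι)
    (z : B i → K) :
    Function.update (combine ω x) i z =
      combine ω (Function.update x i fun k b ↦ ω.repr (z b) k) := by
  funext j b
  obtain rfl | hj := eq_or_ne j i
  · simp only [combine, Function.update_self, ω.sum_repr]
  · simp only [combine, Function.update_of_ne hj]

end combine

section extension

variable {ι F K κ : Type*} [Field F] [Field K] [Algebra F K] [Fintype ι] [DecidableEq ι]
  [Fintype κ] {i₀ : ι}

theorem RankLE.restrictScalars {V : ι → Type*} [∀ i, AddCommMonoid (V i)] [∀ i, Module F (V i)]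
    [∀ i, Module K (V i)] [∀ i, IsScalarTower F K (V i)] {r : ℕ} {Φ : (∀ i, V i) → K}
    (hΦ : RankLE K i₀ r Φ) (ω : Module.Basis κ F K) (π : K →ₗ[F] F) :
    RankLE F i₀ (r * Fintype.card κ) fun v ↦ π (Φ v) := by
  refine hΦ.map (π.toAddMonoidHom.compLeft (∀ i, V i)) ?_
  rintro _ ⟨I, hI, hi₀, β, γ, hβ, hγ, rfl⟩
  have hsum : π.toAddMonoidHom.compLeft (∀ i, V i) (β * γ) =
      ∑ k, fun v ↦ ω.coord k (β v) * π (ω k * γ v) := by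
    funext v
    calc π (β v * γ v) = π (∑ k, (ω.coord k (β v) • ω k) * γ v) := by
          rw [← sum_mul, ← ω.sum_repr (β v)]
          simp
      _ = (∑ k, fun v ↦ ω.coord k (β v) * π (ω k * γ v)) v := by
          simp only [smul_mul_assoc, map_sum, map_smul, smul_eq_mul, Finset.sum_apply]
  have h := RankLE.sum fun k (_ : k ∈ univ) ↦ IsReducible.rankLE_one ⟨I, hI, hi₀, _, _,
    hβ.restrictScalars.linearMap_comp (ω.coord k),
    hγ.restrictScalars.linearMap_comp (π ∘ₗ LinearMap.mulLeft F (ω k)), rfl⟩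
  rw [hsum]
  rwa [mul_one, card_univ] at h

variable {B : ι → Type*} [∀ i, Fintype (B i)]

theorem rankLE_coordForm_of_basis (ω : Module.Basis κ F K) {a : (∀ i, B i) → F} {r : ℕ}
    (h : RankLE K i₀ r (coordForm K a)) :
    RankLE F i₀ (r * Fintype.card κ) (coordForm F a) := by
  obtain ⟨π, hπ⟩ := LinearMap.exists_leftInverse_of_injective (Algebra.linearMap F K)
    (LinearMap.ker_eq_bot.2 (algebraMap F K).injective)
  have hπ' (v : ∀ i, B i → F) :
      π (coordForm K a fun i ↦ (Algebra.linearMap F K).compLeft (B i) (v i)) =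
        coordForm F a v := by
    refine Eq.trans (congrArg π ?_) (LinearMap.congr_fun hπ (coordForm F a v))
    exact (map_coordForm (Algebra.ofId F K) a v).symm
  simpa only [hπ'] using (h.restrictScalars ω π).comp_linearMap
    fun i ↦ (Algebra.linearMap F K).compLeft (B i)

theorem coordForm_combine (ω : Module.Basis κ F K) (a : (∀ i, B i) → F)
    (x : ∀ i, κ → B i → F) :
    coordForm K a (combine ω x) =
      ∑ J : ι → κ, coordForm F a (fun i ↦ x i (J i)) • ∏ i, ω (J i) := by
  classical
  simp only [coordForm_apply, combine, sum_smul]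
  rw [sum_comm]
  refine sum_congr rfl fun j _ ↦ ?_
  rw [prod_univ_sum, Fintype.piFinset_univ, mul_sum]
  refine sum_congr rfl fun J _ ↦ ?_
  rw [prod_smul, Algebra.smul_def, Algebra.smul_def, map_mul, mul_assoc]
  rfl

theorem coordForm_update_combine_eq_zero (ω : Module.Basis κ F K) {a : (∀ i, B i) → F}
    {x : ∀ i, κ → B i → F}
    (hx : ∀ (J : ι → κ) z, coordForm F a (Function.update (fun i ↦ x i (J i)) i₀ z) = 0)
    (z : B i₀ → K) : coordForm K a (Function.update (combine ω x) i₀ z) = 0 := by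
  classical
  rw [update_combine, coordForm_combine]
  refine sum_eq_zero fun J _ ↦ ?_
  have hJ : (fun i ↦ Function.update x i₀ (fun k b ↦ ω.repr (z b) k) i (J i)) =
      Function.update (fun i ↦ x i (J i)) i₀ fun b ↦ ω.repr (z b) (J i₀) := by
    funext i
    obtain rfl | hi := eq_or_ne i i₀
    · simp only [Function.update_self]
    · simp only [Function.update_of_ne hi]
  rw [hJ, hx, zero_smul]

end extension

theorem card_pi_pi {ι F : Type*} {B : ι → Type*} [Fintype ι] [DecidableEq ι] [∀ i, Fintype (B i)]
    [∀ i, DecidableEq (B i)] [Fintype F] :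
    Fintype.card (∀ i, B i → F) = Fintype.card F ^ Fintype.card (Sigma B) := by
  rw [← Fintype.card_fun, Fintype.card_congr (Equiv.piCurry fun (i : ι) (_ : B i) ↦ F)]

theorem rankLE_coordForm_of_extension {s m : ℕ} {B : Fin (s + 1) → Type*} [∀ i, Fintype (B i)]
    {F K : Type*} [Field F] [Fintype F] [Field K] [Algebra F K]
    (ω : Module.Basis (Fin m) F K) {a : (∀ i, B i) → F} {i₀ : Fin (s + 1)} {l L N : ℕ}
    {S : Finset (∀ i, B i → F)} (hzero : ∀ x ∈ S, ∀ z, coordForm F a (Function.update x i₀ z) = 0)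
    (hS : Fintype.card F ^ Fintype.card (Sigma B) ≤ #S * Fintype.card F ^ l) (hL : l * m ^ s = L)
    (hN : 2 ^ s * (2 * (L + 1)) = N)
    (hF : (8 * ((s + 1) * N ^ (s + 1) + 1)) ^ 2 ≤ Fintype.card F ^ m) :
    RankLE F i₀ (s * (2 ^ s * (N + 1)) * m) (coordForm F a) := by
  classical
  have := Module.Finite.of_basis ω
  have : Finite K := Module.finite_of_finite F
  have := Fintype.ofFinite K
  have hK : Fintype.card K = Fintype.card F ^ m := by
    rw [Module.card_fintype ω, Fintype.card_fin]
  let Y : Finset (∀ i, Fin m → B i → F) := {x | ∀ J : Fin (s + 1) → Fin m, (fun i ↦ x i (J i)) ∈ S}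
  have hY : Fintype.card K ^ Fintype.card (Sigma B) ≤ #Y * Fintype.card K ^ L := by
    calc Fintype.card K ^ Fintype.card (Sigma B) = Fintype.card (∀ i, Fin m → B i → F) := by
          rw [hK, pow_right_comm, ← card_pi_pi, Fintype.card_pi, Fintype.card_pi,
            ← prod_pow]
          simp
      _ ≤ #Y * (Fintype.card F ^ l) ^ m ^ (s + 1) :=
          card_pi_le_card_mul_pow (by rwa [card_pi_pi]) m fun x hx ↦ by simpa [Y] using hx
      _ = #Y * Fintype.card K ^ L := by rw [hK, ← hL]; ring
  have hrank : RankLE K i₀ (s * (2 ^ s * (N + 1))) (coordForm K (algebraMap F K ∘ a)) := by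
    refine rankLE_coordForm (X := Y.map ⟨combine ω, combine_injective ω⟩) _ (Fintype.card_fin _)
      ?_ ?_ hN (by rwa [hK])
    · rw [coordForm_algebraMap_comp, forall_mem_map]
      exact fun x hx ↦ coordForm_update_combine_eq_zero ω fun J ↦ hzero _ ((mem_filter.1 hx).2 J)
    · rwa [card_map]
  rw [coordForm_algebraMap_comp] at hrank
  simpa only [Fintype.card_fin] using rankLE_coordForm_of_basis ω hrank

theorem exists_finite_extension (F : Type*) [Field F] [Finite F] (m : ℕ) [NeZero m] :
    ∃ (K : Type) (_ : Field K) (_ : Algebra F K),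
      Nonempty (Module.Basis (Fin m) F K) := by
  obtain ⟨p, hp⟩ := CharP.exists F
  have : Fact p.Prime := ⟨CharP.char_is_prime F p⟩
  exact ⟨FiniteField.Extension F p m, inferInstance, inferInstance,
    ⟨Module.finBasisOfFinrankEq F _ (FiniteField.finrank_extension F p m)⟩⟩

theorem exists_forall_mul_pow_le_two_pow (A e : ℕ) :
    ∃ M : ℕ, 0 < M ∧ ∀ m ≥ M, A * m ^ e ≤ 2 ^ m := by
  have h := (tendsto_pow_const_div_const_pow_of_one_lt (r := (2 : ℝ)) e
    one_lt_two).const_mul (A : ℝ)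
  rw [mul_zero] at h
  obtain ⟨M, hM⟩ := Filter.eventually_atTop.1 (h.eventually_le_const one_pos)
  refine ⟨M + 1, M.succ_pos, fun m hm ↦ ?_⟩
  have := hM m (by lia)
  rw [← mul_div_assoc, div_le_one (by positivity)] at this
  exact_mod_cast this

theorem exists_degree_bounds (s : ℕ) : ∃ c : ℕ, 0 < c ∧ ∀ l m L N : ℕ, 0 < l → c * l = m →
    l * m ^ s = L → 2 ^ s * (2 * (L + 1)) = N →
    (8 * ((s + 1) * N ^ (s + 1) + 1)) ^ 2 ≤ 2 ^ m ∧ N + 1 ≤ 2 ^ (s + 3) * m ^ (s + 1) := by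
  obtain ⟨c, hc, hexp⟩ := exists_forall_mul_pow_le_two_pow
    ((8 * (s + 2) * (2 ^ (s + 2)) ^ (s + 1)) ^ 2) (2 * ((s + 1) * (s + 1)))
  refine ⟨c, hc, fun l m L N hl hm hL hN ↦ ?_⟩
  have hcm : c ≤ m := hm ▸ Nat.le_mul_of_pos_right c hl
  have hlm : l ≤ m := hm ▸ Nat.le_mul_of_pos_left l hc
  have hm0 : 0 < m := hc.trans_le hcm
  have hZ : 1 ≤ 2 ^ (s + 2) * m ^ (s + 1) := Nat.one_le_iff_ne_zero.2 (by positivity)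
  have hN' : N ≤ 2 ^ (s + 2) * m ^ (s + 1) := by
    calc N = 2 ^ s * (2 * (l * m ^ s + 1)) := by rw [hL, hN]
      _ ≤ 2 ^ s * (2 * (m * m ^ s + m * m ^ s)) := by
          gcongr
          exact Nat.one_le_iff_ne_zero.2 (by positivity)
      _ = 2 ^ (s + 2) * m ^ (s + 1) := by ring
  constructor
  · calc (8 * ((s + 1) * N ^ (s + 1) + 1)) ^ 2
        ≤ (8 * ((s + 1) * (2 ^ (s + 2) * m ^ (s + 1)) ^ (s + 1) +
            (2 ^ (s + 2) * m ^ (s + 1)) ^ (s + 1))) ^ 2 := by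
          gcongr
          exact one_le_pow₀ hZ
      _ = (8 * (s + 2) * (2 ^ (s + 2)) ^ (s + 1)) ^ 2 * m ^ (2 * ((s + 1) * (s + 1))) := by
          rw [mul_pow _ (m ^ _), pow_mul' m, pow_mul m]
          ring
      _ ≤ 2 ^ m := hexp m hcm
  · calc N + 1 ≤ 2 ^ (s + 2) * m ^ (s + 1) + 2 ^ (s + 2) * m ^ (s + 1) := add_le_add hN' hZ
      _ = 2 ^ (s + 3) * m ^ (s + 1) := by ring

theorem multilinearMap_apply_eq_coordForm {ι R : Type*} [Fintype ι] [DecidableEq ι]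
    [CommSemiring R] {G : ι → Type*} [∀ i, AddCommMonoid (G i)] [∀ i, Module R (G i)]
    {B : ι → Type*} [∀ i, Fintype (B i)] (b : ∀ i, Module.Basis (B i) R (G i))
    (α : MultilinearMap R G R) (x : ∀ i, G i) :
    α x = coordForm R (fun j ↦ α fun i ↦ b i (j i)) fun i ↦ (b i).equivFun (x i) := by
  classical
  calc α x = α fun i ↦ ∑ j, (b i).equivFun (x i) j • b i j := by
        simp only [Module.Basis.sum_equivFun]
    _ = _ := by
        rw [α.map_sum, coordForm_apply]
        refine sum_congr rfl fun j _ ↦ ?_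
        rw [α.map_smul_univ, smul_eq_mul, mul_comm, Algebra.algebraMap_self_apply]

theorem rankLE_of_extension {s m : ℕ} {F K : Type*} [Field F] [Fintype F] [Field K] [Algebra F K]
    (ω : Module.Basis (Fin m) F K) {G : Fin (s + 1) → Type*}
    [∀ i, AddCommGroup (G i)] [∀ i, Module F (G i)] [∀ i, Fintype (G i)]
    {α : MultilinearMap F G F} {i₀ : Fin (s + 1)} {l L N : ℕ} {S : Finset (∀ i, G i)}
    (hzero : ∀ x ∈ S, ∀ z, α (Function.update x i₀ z) = 0)
    (hS : Fintype.card (∀ i, G i) ≤ #S * Fintype.card F ^ l) (hL : l * m ^ s = L)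
    (hN : 2 ^ s * (2 * (L + 1)) = N)
    (hF : (8 * ((s + 1) * N ^ (s + 1) + 1)) ^ 2 ≤ Fintype.card F ^ m) :
    RankLE F i₀ (s * (2 ^ s * (N + 1)) * m) α := by
  let b (i : Fin (s + 1)) := Module.finBasis F (G i)
  let e : (∀ i, G i) ≃ (∀ i, Fin (Module.finrank F (G i)) → F) :=
    Equiv.piCongrRight fun i ↦ (b i).equivFun.toEquiv
  have hα := multilinearMap_apply_eq_coordForm b α
  have hupdate (x : ∀ i, G i) (z : Fin (Module.finrank F (G i₀)) → F) :
      coordForm F (fun j ↦ α fun i ↦ b i (j i)) (Function.update (e x) i₀ z) =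
        α (Function.update x i₀ ((b i₀).equivFun.symm z)) := by
    rw [hα]
    refine congrArg _ (funext fun i ↦ Eq.symm ?_)
    rw [Function.apply_update fun i ↦ (b i).equivFun, LinearEquiv.apply_symm_apply]
    rfl
  have hrank := rankLE_coordForm_of_extension (i₀ := i₀) (S := S.map e.toEmbedding) ω
    (a := fun j ↦ α fun i ↦ b i (j i)) ?_ ?_ hL hN hF
  · simpa only [LinearEquiv.coe_coe, ← hα] using
      hrank.comp_linearMap fun i ↦ (b i).equivFun.toLinearMap
  · rw [forall_mem_map]
    exact fun x hx z ↦ (hupdate x z).trans (hzero x hx _)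
  · rwa [card_map, ← card_pi_pi, ← Fintype.card_congr e]

theorem exists_rankLE_of_card_le (s : ℕ) : ∃ A : ℕ, ∀ (F : Type*) [Field F] [Fintype F]
    (G : Fin (s + 1) → Type*) [∀ i, AddCommGroup (G i)] [∀ i, Module F (G i)] [∀ i, Fintype (G i)]
    (α : MultilinearMap F G F) (i₀ : Fin (s + 1)) (S : Finset (∀ i, G i)) (l : ℕ), 0 < l →
    (∀ x ∈ S, ∀ z, α (Function.update x i₀ z) = 0) →
    Fintype.card (∀ i, G i) ≤ #S * Fintype.card F ^ l → RankLE F i₀ (A * l ^ (s + 2)) α := by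
  obtain ⟨c, hc, hbounds⟩ := exists_degree_bounds s
  refine ⟨s * 2 ^ (2 * s + 3) * c ^ (s + 2), fun F _ _ G _ _ _ α i₀ S l hl hzero hS ↦ ?_⟩
  have : NeZero (c * l) := ⟨by positivity⟩
  obtain ⟨K, _, _, ⟨ω⟩⟩ := exists_finite_extension F (c * l)
  obtain ⟨hF, hN⟩ := hbounds l (c * l) _ _ hl rfl rfl rfl
  refine (rankLE_of_extension ω hzero hS rfl rfl
    (hF.trans (Nat.pow_le_pow_left Fintype.one_lt_card _))).mono ?_
  calc s * (2 ^ s * (2 ^ s * (2 * (l * (c * l) ^ s + 1)) + 1)) * (c * l)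
      ≤ s * (2 ^ s * (2 ^ (s + 3) * (c * l) ^ (s + 1))) * (c * l) := by gcongr
    _ = s * 2 ^ (2 * s + 3) * c ^ (s + 2) * l ^ (s + 2) := by ring

section bias

variable {ι : Type*} [Fintype ι] [DecidableEq ι]

theorem sum_sum_update {G : ι → Type*} [∀ i, Fintype (G i)] {M : Type*} [AddCommMonoid M]
    (f : (∀ i, G i) → M) (i : ι) :
    ∑ x, ∑ z, f (Function.update x i z) = Fintype.card (G i) • ∑ x, f x := by
  let e : (∀ i, G i) × G i ≃ (∀ i, G i) × G i :=
    { toFun := fun p ↦ (Function.update p.1 i p.2, p.1 i)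
      invFun := fun p ↦ (Function.update p.1 i p.2, p.1 i)
      left_inv := fun p ↦ by simp
      right_inv := fun p ↦ by simp }
  calc ∑ x, ∑ z, f (Function.update x i z) = ∑ p, f (e p).1 := (Fintype.sum_prod_type' _).symm
    _ = ∑ p : (∀ i, G i) × G i, f p.1 := e.sum_comp fun p ↦ f p.1
    _ = Fintype.card (G i) • ∑ x, f x := by
        rw [Fintype.sum_prod_type, smul_sum]
        simp only [sum_const, card_univ]

variable {F : Type*} [Field F]

open Classical in
theorem sum_addChar_linearMap {V : Type*} [AddCommGroup V] [Module F V] [Fintype V]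
    {χ : AddChar F ℂ} (hχ : χ ≠ 1) (φ : V →ₗ[F] F) :
    ∑ z, χ (φ z) = if φ = 0 then (Fintype.card V : ℂ) else 0 := by
  have hφ : χ.compAddMonoidHom φ.toAddMonoidHom = 0 ↔ φ = 0 := by
    constructor
    · contrapose!
      intro hφ h
      obtain ⟨y, hy⟩ := AddChar.ne_one_iff.1 hχ
      obtain ⟨z, rfl⟩ := LinearMap.surjective hφ y
      exact hy (DFunLike.congr_fun h z)
    · rintro rfl
      exact DFunLike.ext _ _ fun _ ↦ χ.map_zero_eq_one
  rw [← if_congr hφ rfl rfl]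
  exact AddChar.sum_eq_ite (χ.compAddMonoidHom φ.toAddMonoidHom)

open Classical in
theorem sum_addChar_multilinearMap {G : ι → Type*} [∀ i, AddCommGroup (G i)] [∀ i, Module F (G i)]
    [∀ i, Fintype (G i)] {χ : AddChar F ℂ} (hχ : χ ≠ 1) (α : MultilinearMap F G F) (i₀ : ι) :
    ∑ x, χ (α x) = #{x | ∀ z, α (Function.update x i₀ z) = 0} := by
  have hG : (Fintype.card (G i₀) : ℂ) ≠ 0 := Nat.cast_ne_zero.2 Fintype.card_ne_zero
  apply mul_left_cancel₀ hG
  calc (Fintype.card (G i₀) : ℂ) * ∑ x, χ (α x)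
      = ∑ x, ∑ z, χ (α.toLinearMap x i₀ z) := by
        rw [← nsmul_eq_mul, ← sum_sum_update]
        rfl
    _ = Fintype.card (G i₀) * #{x | ∀ z, α (Function.update x i₀ z) = 0} := by
        simp only [sum_addChar_linearMap hχ]
        simp only [LinearMap.ext_iff, MultilinearMap.toLinearMap_apply, LinearMap.zero_apply,
          sum_ite, sum_const_zero, add_zero]
        rw [sum_const, nsmul_eq_mul, mul_comm]

open Classical in
theorem expect_addChar_multilinearMap {G : ι → Type*} [∀ i, AddCommGroup (G i)]
    [∀ i, Module F (G i)] [∀ i, Fintype (G i)] {χ : AddChar F ℂ} (hχ : χ ≠ 1)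
    (α : MultilinearMap F G F) (i₀ : ι) :
    ((∑ x, χ (α x)) / (Fintype.card (∀ i, G i) : ℂ)).re =
      #{x | ∀ z, α (Function.update x i₀ z) = 0} / Fintype.card (∀ i, G i) := by
  rw [sum_addChar_multilinearMap hχ α i₀, ← Complex.ofReal_natCast, ← Complex.ofReal_natCast,
    ← Complex.ofReal_div, Complex.ofReal_re]

end bias

theorem exists_nat_le_two_mul_logb {q c : ℝ} (hq : 1 < q) (hc : 0 < c) (hc1 : c ≤ 1) :
    ∃ l : ℕ, 0 < l ∧ c⁻¹ ≤ q ^ l ∧ l ≤ 2 * Real.logb q (q * c⁻¹) := by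
  have hc' : 1 ≤ c⁻¹ := (one_le_inv₀ hc).2 hc1
  have hlog : Real.logb q (q * c⁻¹) = 1 + Real.logb q c⁻¹ := by
    rw [Real.logb_mul (by positivity) (by positivity), Real.logb_self_eq_one hq]
  have hlog' : 0 ≤ Real.logb q c⁻¹ := Real.logb_nonneg hq hc'
  refine ⟨⌈Real.logb q (q * c⁻¹)⌉₊, Nat.ceil_pos.2 (by linarith), ?_, ?_⟩
  · rw [← Real.rpow_natCast, ← Real.logb_le_iff_le_rpow hq (by positivity)]
    linarith [Nat.le_ceil (Real.logb q (q * c⁻¹))]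
  · linarith [Nat.ceil_lt_add_one (a := Real.logb q (q * c⁻¹)) (by linarith)]

theorem exists_card_le_mul_pow {q t : ℕ} (hq : 1 < q) {z : ℕ} (hz : z ≤ t) (ht : 0 < t) {c : ℝ}
    (hc : 0 < c) (hcz : c ≤ (z : ℝ) / t) :
    ∃ l : ℕ, 0 < l ∧ t ≤ z * q ^ l ∧ l ≤ 2 * Real.logb q (q * c⁻¹) := by
  have ht' : (0 : ℝ) < t := mod_cast ht
  have hc1 : c ≤ 1 := hcz.trans (div_le_one_of_le₀ (mod_cast hz) ht'.le)
  obtain ⟨l, hl, hcl, hlog⟩ := exists_nat_le_two_mul_logb (q := q) (mod_cast hq) hc hc1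
  refine ⟨l, hl, ?_, hlog⟩
  have : (t : ℝ) ≤ z * q ^ l :=
    calc (t : ℝ) = c * t * c⁻¹ := by field_simp
      _ ≤ z * q ^ l := by
        gcongr
        exact (le_div_iff₀ ht').1 hcz
  exact_mod_cast this

end PartitionRank

/-- **Strong inverse theorem for multilinear forms of low analytic rank.**
For every positive integer `k` there are constants `C, D > 0` such that every
multilinear form `α : G 0 × ⋯ × G (k-1) → 𝔽` with bias `𝔼ₓ χ(α x) ≥ c > 0`
can be written as `α x = ∑_{i < r} β i (x_{I i}) * γ i (x_{[k] ∖ I i})` with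
`r ≤ C (log_{|𝔽|}(|𝔽| c⁻¹))^D`, where each `I i` is a nonempty subset of `[k-1]`
(i.e. avoiding the last coordinate) and `β i`, `γ i` are multilinear forms on the
corresponding coordinates. -/
theorem strong_inverse_theorem :
    ∀ k : ℕ, 0 < k → ∃ C D : ℝ, 0 < C ∧ 0 < D ∧
      ∀ (𝔽 : Type) [Field 𝔽] [Fintype 𝔽]
        (G : Fin k → Type) [∀ i, AddCommGroup (G i)] [∀ i, Module 𝔽 (G i)]
        [∀ i, Fintype (G i)] [∀ i, FiniteDimensional 𝔽 (G i)]
        (χ : AddChar 𝔽 ℂ), χ ≠ 1 →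
      ∀ (α : MultilinearMap 𝔽 G 𝔽) (c : ℝ), 0 < c →
      c ≤ (((∑ x : ∀ i, G i, χ (α x)) / (Fintype.card (∀ i, G i) : ℂ)).re) →
      ∃ r : ℕ,
        (r : ℝ) ≤ C * (Real.logb (Fintype.card 𝔽) ((Fintype.card 𝔽 : ℝ) * c⁻¹)) ^ D ∧
        ∃ (I : Fin r → Finset (Fin k))
          (β : ∀ i, MultilinearMap 𝔽 (fun j : ↥(I i) => G j.1) 𝔽)
          (γ : ∀ i, MultilinearMap 𝔽 (fun j : ↥((I i)ᶜ) => G j.1) 𝔽),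
          (∀ i, (I i).Nonempty ∧ ∀ j ∈ I i, (j : ℕ) + 1 < k) ∧
          ∀ x : ∀ i, G i, α x = ∑ i, β i (fun j => x j.1) * γ i (fun j => x j.1) := by
  classical
  rintro (_ | s) hk
  · exact absurd hk (lt_irrefl 0)
  obtain ⟨A, hA⟩ := PartitionRank.exists_rankLE_of_card_le s
  refine ⟨(A + 1) * 2 ^ (s + 2), (s + 2 : ℕ), by positivity, by positivity,
    fun 𝔽 _ _ G _ _ _ _ χ hχ α c hc hbias ↦ ?_⟩
  let Z : Finset (∀ i, G i) := {x | ∀ z, α (Function.update x (Fin.last s) z) = 0}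
  rw [PartitionRank.expect_addChar_multilinearMap hχ α (Fin.last s)] at hbias
  obtain ⟨l, hl, hZ, hlog⟩ := PartitionRank.exists_card_le_mul_pow
    (Fintype.one_lt_card (α := 𝔽)) Z.card_le_univ Fintype.card_pos hc hbias
  have hrank := hA 𝔽 G α (Fin.last s) Z l hl (by simp [Z]) hZ
  obtain ⟨r, hr, I, β, γ, hI, hα⟩ := hrank.exists_multilinearMap
  refine ⟨r, ?_, I, β, γ, fun i ↦ ⟨(hI i).1, fun j hj ↦ ?_⟩, hα⟩
  · set lg := Real.logb (Fintype.card 𝔽) (Fintype.card 𝔽 * c⁻¹)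
    calc (r : ℝ) ≤ (A * l ^ (s + 2) : ℕ) := mod_cast hr
      _ = A * (l : ℝ) ^ (s + 2) := by push_cast; rfl
      _ ≤ (A + 1) * (2 * lg) ^ (s + 2) := by gcongr; linarith
      _ = (A + 1) * 2 ^ (s + 2) * lg ^ ((s + 2 : ℕ) : ℝ) := by
        rw [Real.rpow_natCast, mul_pow, mul_assoc]
  · exact Nat.succ_lt_succ (Fin.val_lt_last (ne_of_mem_of_not_mem hj (hI i).2))
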